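/- arXiv:1301.5633 — 5 statements merged into one kernel-verified Lean document; each statement's English description precedes it below -/
import Mathlib

section
/- Let x ∈ Γ₊ ∪ Γ₋. If x ∈ Γ₋ then dist(φ(t,x), K) → 0 as t → +∞, and if x ∈ Γ₊ then dist(φ(t,x), K) → 0 as t → −∞. (In particular, if Γ₊ ∪ Γ₋ is nonempty then K is nonempty.) -/
open Filter Metric

theorem aux_tendsto {X : Type*} [MetricSpace X]
    (φ : ℝ → X → X)
    (hφcont : Continuous fun p : ℝ × X => φ p.1 p.2)
    (hφadd : ∀ (t s : ℝ) (x : X), φ (t + s) x = φ t (φ s x))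
    (C : Set X) (hC : IsCompact C) (K : Set X)
    (hK : ∀ y, (∀ s, φ s y ∈ C) → y ∈ K) (x : X) (l : Filter ℝ)
    (hl : ∀ s : ℝ, Tendsto (fun t => s + t) l l)
    (hx : ∀ᶠ t in l, φ t x ∈ C) :
    Tendsto (fun t : ℝ => infDist (φ t x) K) l (nhds 0) := by
  rw [tendsto_iff_ultrafilter]
  intro u hu
  obtain ⟨y, -, hy⟩ := hC.ultrafilter_le_nhds (u.map (fun t => φ t x))
    (by
      rw [le_principal_iff]
      exact hu hx)
  have hy' : Tendsto (fun t => φ t x) u (nhds y) := hy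
  have hyK : y ∈ K := by
    apply hK
    intro s
    have hs : Continuous (φ s) := hφcont.comp (by fun_prop : Continuous fun z : X => (s, z))
    refine hC.isClosed.mem_of_tendsto ((hs.tendsto y).comp hy') ?_
    filter_upwards [hu ((hl s).eventually hx)] with t ht
    simpa [hφadd] using ht
  have h := ((continuous_infDist_pt K).tendsto y).comp hy'
  rw [infDist_zero_of_mem hyK] at h
  exact h

/-- Let `φ` be a continuous flow on a metric space `X`, `C` a compact subset,
`Γ₋`/`Γ₊` the incoming/outgoing tails and `K = Γ₊ ∩ Γ₋` the trapped set.  If `x ∈ Γ₋` then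
`dist(φ(t,x), K) → 0` as `t → +∞`, and if `x ∈ Γ₊` then `dist(φ(t,x), K) → 0` as `t → −∞`. -/
theorem stmt_0 {X : Type*} [MetricSpace X]
    (φ : ℝ → X → X)
    (hφcont : Continuous fun p : ℝ × X => φ p.1 p.2)
    (hφ0 : ∀ x : X, φ 0 x = x)
    (hφadd : ∀ (t s : ℝ) (x : X), φ (t + s) x = φ t (φ s x))
    (C : Set X) (hC : IsCompact C)
    (Γm Γp K : Set X)
    (hΓm : Γm = {x | x ∈ C ∧ ∀ t : ℝ, 0 ≤ t → φ t x ∈ C})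
    (hΓp : Γp = {x | x ∈ C ∧ ∀ t : ℝ, 0 ≤ t → φ (-t) x ∈ C})
    (hK : K = Γp ∩ Γm)
    (x : X) (hx : x ∈ Γp ∪ Γm) :
    (x ∈ Γm → Tendsto (fun t : ℝ => infDist (φ t x) K) atTop (nhds 0)) ∧
    (x ∈ Γp → Tendsto (fun t : ℝ => infDist (φ t x) K) atBot (nhds 0)) := by
  have hK' : ∀ y, (∀ s, φ s y ∈ C) → y ∈ K := by
    intro y hy
    have h0 : y ∈ C := by simpa [hφ0] using hy 0
    rw [hK, hΓp, hΓm]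
    exact ⟨⟨h0, fun t _ => hy _⟩, ⟨h0, fun t _ => hy _⟩⟩
  constructor
  · intro h
    rw [hΓm] at h
    refine aux_tendsto φ hφcont hφadd C hC K hK' x atTop
      (fun s => tendsto_atTop_add_const_left _ s tendsto_id) ?_
    filter_upwards [eventually_ge_atTop 0] with t ht
    exact h.2 t ht
  · intro h
    rw [hΓp] at h
    refine aux_tendsto φ hφcont hφadd C hC K hK' x atBot
      (fun s => tendsto_atBot_add_const_left _ s tendsto_id) ?_
    filter_upwards [eventually_le_atBot 0] with t ht
    simpa using h.2 (-t) (by linarith)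
end

section
/- For every open set U₁ ⊆ X with K ⊆ U₁ there exists an open set U₂ ⊆ X with K ⊆ U₂ such that: for every x ∈ X and T ≥ 0 with φ(t,x) ∈ C for all t ∈ [0,T], if x ∈ U₂ and φ(T,x) ∈ U₂, then φ(t,x) ∈ U₁ for all t ∈ [0,T]. -/
/-- For every open `U₁ ⊇ K` there is an open `U₂ ⊇ K` such that any flow segment
that stays in `C`, starts in `U₂` and ends in `U₂`, stays in `U₁` for the whole time. -/
theorem stmt_1 {X : Type*} [MetricSpace X]
    (φ : ℝ → X → X)
    (hφcont : Continuous fun p : ℝ × X => φ p.1 p.2)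
    (hφ0 : ∀ x : X, φ 0 x = x)
    (hφadd : ∀ (t s : ℝ) (x : X), φ (t + s) x = φ t (φ s x))
    (C : Set X) (hC : IsCompact C)
    (Γm Γp K : Set X)
    (hΓm : Γm = {x | x ∈ C ∧ ∀ t : ℝ, 0 ≤ t → φ t x ∈ C})
    (hΓp : Γp = {x | x ∈ C ∧ ∀ t : ℝ, 0 ≤ t → φ (-t) x ∈ C})
    (hK : K = Γp ∩ Γm) :
    ∀ U₁ : Set X, IsOpen U₁ → K ⊆ U₁ →
      ∃ U₂ : Set X, IsOpen U₂ ∧ K ⊆ U₂ ∧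
        ∀ (x : X) (T : ℝ), 0 ≤ T → (∀ t ∈ Set.Icc 0 T, φ t x ∈ C) →
          x ∈ U₂ → φ T x ∈ U₂ → ∀ t ∈ Set.Icc 0 T, φ t x ∈ U₁ := by
  intro U₁ hU₁ hKU
  have hmem : ∀ y, y ∈ K ↔ ∀ s : ℝ, φ s y ∈ C := by
    intro y
    subst hK hΓm hΓp
    constructor
    · rintro ⟨⟨_, h1⟩, ⟨_, h2⟩⟩ s
      rcases le_total 0 s with h | h
      · exact h2 s h
      · have := h1 (-s) (by linarith)
        rwa [neg_neg] at this
    · intro h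
      have h0 := h 0
      rw [hφ0] at h0
      exact ⟨⟨h0, fun t _ => h _⟩, ⟨h0, fun t _ => h _⟩⟩
  have hc : ∀ s : ℝ, Continuous (φ s) := fun s =>
    hφcont.comp (Continuous.prodMk continuous_const continuous_id)
  obtain ⟨F, hF⟩ := (hC.diff hU₁).elim_finite_subcover (fun s : ℝ => (φ s) ⁻¹' Cᶜ)
    (fun s => hC.isClosed.isOpen_compl.preimage (hc s)) (by
      intro y hy
      by_contra hcon
      apply hy.2
      apply hKU
      rw [hmem]
      intro s
      by_contra hs
      exact hcon (Set.mem_iUnion.2 ⟨s, hs⟩))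
  obtain ⟨L, hL⟩ := (F.image (fun s => |s|)).exists_le
  have hL' : ∀ y ∈ C, (∀ s ∈ Set.Icc (-L) L, φ s y ∈ C) → y ∈ U₁ := by
    intro y hy h
    by_contra hyU
    obtain ⟨s, hs, hsy⟩ := Set.mem_iUnion₂.1 (hF ⟨hy, hyU⟩)
    exact hsy (h s (abs_le.1 (hL _ (Finset.mem_image_of_mem _ hs))))
  refine ⟨{x | ∀ s ∈ Set.Icc (-L) L, φ s x ∈ U₁}, ?_, ?_, ?_⟩
  · rw [isOpen_iff_mem_nhds]
    intro x hx
    refine isCompact_Icc.eventually_forall_of_forall_eventually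
      (P := fun x s => φ s x ∈ U₁) ?_
    intro s hs
    exact (hU₁.preimage (hφcont.comp continuous_swap)).mem_nhds (hx s hs)
  · intro x hx s _
    apply hKU
    rw [hmem] at hx ⊢
    intro t
    rw [← hφadd]
    exact hx _
  · intro x T hT hxC hx hxT t ht
    by_cases h1 : t ≤ L
    · exact hx t ⟨by linarith [ht.1], h1⟩
    by_cases h2 : T - t ≤ L
    · have := hxT (t - T) ⟨by linarith, by linarith [ht.2]⟩
      rwa [← hφadd, sub_add_cancel] at this
    push Not at h1 h2
    apply hL' _ (hxC t ht)
    intro s hs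
    rw [← hφadd]
    exact hxC _ ⟨by linarith [hs.1], by linarith [hs.2]⟩
end

section
/- For every a ∈ 𝒮(ℝ^{2n}) there exists a constant C > 0 such that for all h ∈ (0,1] and all u ∈ 𝒮(ℝⁿ), ‖Op_h^Λ(a)u‖_{L²(ℝⁿ)} ≤ C h^{−1/2} ‖u‖_{L²(ℝⁿ)}. -/
open MeasureTheory
open scoped RealInnerProductSpace

/-- Points of `ℝⁿ` (with `n = m + 1 ≥ 1`) are written `(x', xₙ)` with
`x' ∈ ℝ^{n-1} = EuclideanSpace ℝ (Fin m)` and `xₙ ∈ ℝ`. -/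
abbrev V (m : ℕ) : Type := EuclideanSpace ℝ (Fin m) × ℝ

/-- The quantization `Op_h^Λ(a)u(x) = (2πh)^{-n} ∫ e^{(i/h)(x'·ξ' - y·ξ)} a(x,ξ) u(y) dy dξ`. -/
noncomputable def OpL (m : ℕ) (h : ℝ) (a : V m × V m → ℂ) (u : V m → ℂ) (x : V m) : ℂ :=
  ((2 * Real.pi * h) ^ (m + 1))⁻¹ •
    ∫ p : V m × V m,
      Complex.exp (Complex.I *
        Complex.ofReal ((⟪x.1, p.2.1⟫ - (⟪p.1.1, p.2.1⟫ + p.1.2 * p.2.2)) / h)) *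
      a (x, p.2) * u p.1

open scoped ENNReal ContDiff

theorem schur_bound {α : Type*} [MeasurableSpace α] (μ : Measure α) [SFinite μ]
    (k : α → α → ℝ≥0∞) (hk : Measurable (Function.uncurry k)) (u : α → ℝ≥0∞) (hu : Measurable u)
    (T : α → ℝ≥0∞) (hT : ∀ x, T x ≤ ∫⁻ y, k x y * u y ∂μ) (A B : ℝ≥0∞)
    (hA : ∀ x, ∫⁻ y, k x y ∂μ ≤ A) (hB : ∀ y, ∫⁻ x, k x y ∂μ ≤ B) :
    ∫⁻ x, T x ^ (2:ℝ) ∂μ ≤ A * B * ∫⁻ y, u y ^ (2:ℝ) ∂μ := by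
  have hkx : ∀ x, Measurable (k x) := fun x => hk.comp measurable_prodMk_left
  have key : ∀ x, T x ^ (2:ℝ) ≤ A * ∫⁻ y, k x y * u y ^ (2:ℝ) ∂μ := by
    intro x
    have h1 := ENNReal.lintegral_mul_le_Lp_mul_Lq μ Real.HolderConjugate.two_two
      (f := fun y => k x y ^ (1/2:ℝ)) (g := fun y => k x y ^ (1/2:ℝ) * u y)
      ((hkx x).pow_const _).aemeasurable (((hkx x).pow_const _).mul hu).aemeasurable
    have e1 : ∀ y, (k x y ^ (1/2:ℝ)) * (k x y ^ (1/2:ℝ) * u y) = k x y * u y := by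
      intro y
      rw [← mul_assoc, ← ENNReal.rpow_add_of_nonneg _ _ (by norm_num) (by norm_num)]
      norm_num
    have e2 : ∀ y, (k x y ^ (1/2:ℝ)) ^ (2:ℝ) = k x y := by
      intro y
      rw [← ENNReal.rpow_mul]; norm_num
    simp only [Pi.mul_apply, e1, ENNReal.mul_rpow_of_nonneg _ _ (zero_le_two (α := ℝ)), e2] at h1
    calc T x ^ (2:ℝ) ≤ ((∫⁻ y, k x y ∂μ) ^ (1/2:ℝ) *
          (∫⁻ y, k x y * u y ^ (2:ℝ) ∂μ) ^ (1/2:ℝ)) ^ (2:ℝ) := by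
            gcongr; exact (hT x).trans h1
      _ = (∫⁻ y, k x y ∂μ) * ∫⁻ y, k x y * u y ^ (2:ℝ) ∂μ := by
            rw [ENNReal.mul_rpow_of_nonneg _ _ (by norm_num), ← ENNReal.rpow_mul,
              ← ENNReal.rpow_mul]; norm_num
      _ ≤ _ := by gcongr; exact hA x
  have hm : Measurable (Function.uncurry fun x y => k x y * u y ^ (2:ℝ)) := by
    have : Measurable fun p : α × α => k p.1 p.2 := hk
    exact this.mul ((hu.comp measurable_snd).pow_const _)
  calc ∫⁻ x, T x ^ (2:ℝ) ∂μ ≤ ∫⁻ x, A * ∫⁻ y, k x y * u y ^ (2:ℝ) ∂μ ∂μ := lintegral_mono key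
    _ = A * ∫⁻ x, ∫⁻ y, k x y * u y ^ (2:ℝ) ∂μ ∂μ := by
        exact lintegral_const_mul _ hm.lintegral_prod_right'
    _ = A * ∫⁻ y, ∫⁻ x, k x y * u y ^ (2:ℝ) ∂μ ∂μ := by
        rw [lintegral_lintegral_swap hm.aemeasurable]
    _ ≤ A * ∫⁻ y, B * u y ^ (2:ℝ) ∂μ := by
        gcongr with y
        have hky : Measurable fun x => k x y := hk.comp measurable_prodMk_right
        rw [lintegral_mul_const _ hky]
        gcongr
        exact hB y
    _ = _ := by rw [lintegral_const_mul _ (hu.pow_const _), mul_assoc]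

theorem lintegral_scale {E : Type*} [NormedAddCommGroup E] [NormedSpace ℝ E]
    [FiniteDimensional ℝ E] [MeasurableSpace E] [BorelSpace E] (μ : Measure E)
    [μ.IsAddHaarMeasure] (f : E → ℝ≥0∞) (hf : Measurable f) (c : ℝ) (hc : 0 < c) (x0 : E) :
    ∫⁻ x, f (c • (x - x0)) ∂μ =
      ENNReal.ofReal ((c ^ Module.finrank ℝ E)⁻¹) * ∫⁻ x, f x ∂μ := by
  rw [lintegral_sub_right_eq_self (fun x => f (c • x)) x0]
  rw [← lintegral_map hf (measurable_const_smul c), Measure.map_addHaar_smul μ hc.ne',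
    lintegral_smul_measure, abs_of_pos (by positivity)]
  rfl

instance haarV (m : ℕ) : (volume : Measure (V m)).IsAddHaarMeasure :=
  inferInstanceAs ((volume : Measure (EuclideanSpace ℝ (Fin m))).prod
    (volume : Measure ℝ)).IsAddHaarMeasure

/-- the bilinear form -/
noncomputable def LL (m : ℕ) : V m →L[ℝ] V m →L[ℝ] ℝ :=
  LinearMap.toContinuousLinearMap
    ((LinearMap.toContinuousLinearMap : (V m →ₗ[ℝ] ℝ) ≃ₗ[ℝ] _).toLinearMap ∘ₗ
      LinearMap.mk₂ ℝ (fun v w : V m => ⟪v.1, w.1⟫ + v.2 * w.2)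
        (fun a b c => by simp [inner_add_left]; ring)
        (fun a b c => by simp [inner_smul_left]; ring)
        (fun a b c => by simp [inner_add_right]; ring)
        (fun a b c => by simp [inner_smul_right]; ring))

theorem LL_apply (m : ℕ) (v w : V m) : LL m v w = ⟪v.1, w.1⟫ + v.2 * w.2 := rfl

theorem LL_choose (m : ℕ) (w : V m) : ∃ v : V m, ‖v‖ = ‖w‖ ∧ LL m v w = ‖w‖ ^ 2 := by
  rcases le_total ‖w.1‖ ‖w.2‖ with h | h
  · refine ⟨(0, w.2), ?_, ?_⟩
    · simp [Prod.norm_def] at *; exact h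
    · rw [LL_apply, Prod.norm_def, max_eq_right h]; simp [pow_two]
  · refine ⟨(w.1, 0), ?_, ?_⟩
    · simp [Prod.norm_def] at *; exact h
    · rw [LL_apply, Prod.norm_def, max_eq_left h]; simp

theorem fourier_decay (m N : ℕ) (f : V m → ℂ) (hf : ContDiff ℝ ∞ f) (D : ℝ) (hD : 0 ≤ D)
    (r : ℝ) (hr : (Module.finrank ℝ (V m) : ℝ) < r)
    (hb : ∀ n ≤ N, ∀ v, ‖iteratedFDeriv ℝ n f v‖ ≤ D * (1 + ‖v‖) ^ (-r)) (w : V m) :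
    (1 + ‖w‖) ^ N * ‖∫ v, Real.fourierChar (-LL m v w) • f v‖ ≤
      D * (2 ^ N * (1 + 2 ^ N * (N + 1)) * ∫ v : V m, (1 + ‖v‖) ^ (-r)) := by
  have hint : Integrable (fun v : V m => (1 + ‖v‖) ^ (-r)) := integrable_one_add_norm hr
  set I := ∫ v : V m, (1 + ‖v‖) ^ (-r) with hI
  have hI0 : 0 ≤ I := integral_nonneg fun v => by positivity
  have hin : ∀ n ≤ N, Integrable (fun v => ‖iteratedFDeriv ℝ n f v‖) := by
    intro n hn
    refine (hint.const_mul D).mono' ?_ (.of_forall fun v => by simpa using hb n hn v)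
    exact ((hf.continuous_iteratedFDeriv (m := n) (mod_cast le_top)).norm).aestronglyMeasurable
  have hle : ∀ n ≤ N, ∫ v, ‖iteratedFDeriv ℝ n f v‖ ≤ D * I := by
    intro n hn
    rw [hI, ← integral_const_mul]
    exact integral_mono (hin n hn) (hint.const_mul D) (hb n hn)
  set G := ∫ v, Real.fourierChar (-LL m v w) • f v with hG
  have h0 : ‖G‖ ≤ D * I := by
    refine le_trans ?_ (hle 0 (Nat.zero_le _))
    refine (norm_integral_le_integral_norm _).trans_eq ?_
    simp [Circle.norm_smul]
  have hN : ‖w‖ ^ N * ‖G‖ ≤ 2 ^ N * ((N + 1) * (D * I)) := by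
    rcases eq_or_ne w 0 with rfl | hw
    · rcases Nat.eq_zero_or_pos N with rfl | hN
      · simpa using h0
      · simp [hN.ne']; positivity
    obtain ⟨v, hv1, hv2⟩ := LL_choose m w
    have := VectorFourier.pow_mul_norm_iteratedFDeriv_fourierIntegral_le (LL m) (f := f)
      (μ := volume) (K := 0) (N := N) (hf.of_le (mod_cast le_top)) (by
        intro k n hk hn
        have : k = 0 := by simpa using hk
        subst this
        simpa using hin n (by exact_mod_cast hn)) (k := 0) (n := N) (by simp) le_rfl v w
    rw [hv2, hv1, abs_of_nonneg (by positivity)] at this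
    simp only [norm_iteratedFDeriv_zero, pow_zero, zero_add, Finset.range_one, mul_one,
      Nat.cast_zero, mul_zero, Finset.singleton_product, Finset.sum_map,
      Function.Embedding.coeFn_mk, one_mul] at this
    have hw0 : 0 < ‖w‖ ^ N := by positivity
    have h3 : ∑ x ∈ Finset.range (N+1), ∫ v, ‖iteratedFDeriv ℝ x f v‖ ≤ (N + 1) * (D * I) := by
      refine (Finset.sum_le_card_nsmul _ _ (D * I) ?_).trans_eq (by simp)
      intro x hx
      exact hle x (by simpa [Nat.lt_succ_iff] using hx)
    have h4 : (‖w‖ ^ 2) ^ N * ‖G‖ ≤ ‖w‖ ^ N * 2 ^ N * ((N + 1) * (D * I)) := 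
      le_trans this (by gcongr)
    rw [pow_right_comm, pow_two, mul_assoc, mul_assoc] at h4
    exact le_of_mul_le_mul_left h4 hw0
  have h5 : (1 + ‖w‖) ^ N ≤ 2 ^ N * (1 + ‖w‖ ^ N) := by
    have : (1 + ‖w‖) ≤ 2 * max 1 ‖w‖ := by
      have := le_max_left 1 ‖w‖; have := le_max_right 1 ‖w‖; linarith
    calc (1 + ‖w‖) ^ N ≤ (2 * max 1 ‖w‖) ^ N := by gcongr
      _ = 2 ^ N * (max 1 ‖w‖) ^ N := mul_pow _ _ _
      _ ≤ _ := by
        gcongr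
        rcases max_cases 1 ‖w‖ with h | h <;> rw [h.1]
        · simp
        · simp
  calc _ ≤ 2 ^ N * (1 + ‖w‖ ^ N) * ‖G‖ := by gcongr
    _ = 2 ^ N * (‖G‖ + ‖w‖ ^ N * ‖G‖) := by ring
    _ ≤ 2 ^ N * (D * I + 2 ^ N * ((N + 1) * (D * I))) := by gcongr
    _ = _ := by ring

theorem symbol_bound (m N r : ℕ) (a : SchwartzMap (V m × V m) ℂ) :
    ∃ D : ℝ, 0 ≤ D ∧ ∀ x : V m, ∀ n ≤ N, ∀ v : V m,
      ‖iteratedFDeriv ℝ n (fun ξ => a (x, ξ)) v‖ ≤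
        (D * (1 + ‖x.2‖) ^ (-(2:ℝ))) * (1 + ‖v‖) ^ (-(r:ℝ)) := by
  refine ⟨2 ^ (r+2) * (Finset.Iic (r+2, N)).sup (fun m => SchwartzMap.seminorm ℝ m.1 m.2) a,
    by positivity, ?_⟩
  intro x n hn v
  have h1 := SchwartzMap.one_add_le_sup_seminorm_apply (𝕜 := ℝ) (m := (r+2, N)) (k := r+2)
    le_rfl hn a (x, v)
  set D := (2:ℝ) ^ (r+2) * (Finset.Iic (r+2, N)).sup (fun m => SchwartzMap.seminorm ℝ m.1 m.2) a
  have h2 : ‖iteratedFDeriv ℝ n (fun ξ => a (x, ξ)) v‖ ≤ ‖iteratedFDeriv ℝ n a (x, v)‖ := by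
    have e : (fun ξ => a (x, ξ)) = (fun p => a ((x, 0) + p)) ∘
        (ContinuousLinearMap.inr ℝ (V m) (V m)) := by
      ext ξ; simp
    rw [e, ContinuousLinearMap.iteratedFDeriv_comp_right (n := ∞) _ _ _ (mod_cast le_top),
      iteratedFDeriv_comp_add_left]
    · refine (ContinuousMultilinearMap.norm_compContinuousLinearMap_le _ _).trans ?_
      simp only [ContinuousLinearMap.inr_apply, Prod.mk_add_mk, add_zero, zero_add]
      refine mul_le_of_le_one_right (norm_nonneg _) ?_
      refine Finset.prod_le_one (fun _ _ => norm_nonneg _) fun _ _ =>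
        ContinuousLinearMap.norm_inr_le_one _ _ _
    · exact (a.smooth ⊤).comp (contDiff_const.add contDiff_id)
  refine h2.trans ?_
  have hx : ‖x.2‖ ≤ ‖(x, v)‖ := (norm_snd_le x).trans (norm_fst_le (x, v))
  have hv : ‖v‖ ≤ ‖(x, v)‖ := norm_snd_le (x, v)
  rw [Real.rpow_neg (by positivity), Real.rpow_neg (by positivity), Real.rpow_natCast,
    Real.rpow_two, mul_assoc, ← mul_inv, ← div_eq_mul_inv, le_div_iff₀ (by positivity)]
  refine le_trans ?_ h1
  rw [mul_comm, pow_add, mul_comm ((1 + ‖(x, v)‖) ^ r)]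
  gcongr

theorem finrank_V (m : ℕ) : Module.finrank ℝ (V m) = m + 1 := by simp

/-- rescaled difference variable -/
noncomputable def WW (m : ℕ) (c : ℝ) (x y : V m) : V m := c • (y - (x.1, 0))

theorem OpL_eq (m : ℕ) (a : SchwartzMap (V m × V m) ℂ) (h : ℝ) (hh : 0 < h)
    (u : SchwartzMap (V m) ℂ) (x : V m) :
    OpL m h a u x = ((2 * Real.pi * h) ^ (m + 1))⁻¹ •
      ∫ y, (∫ ξ, Real.fourierChar (-LL m ξ (WW m (2 * Real.pi * h)⁻¹ x y)) • a (x, ξ)) * u y := by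
  unfold OpL
  congr 1
  have hp : ∀ y ξ : V m, Complex.exp (Complex.I *
        Complex.ofReal ((⟪x.1, ξ.1⟫ - (⟪y.1, ξ.1⟫ + y.2 * ξ.2)) / h)) * a (x, ξ) * u y =
      (Real.fourierChar (-LL m ξ (WW m (2 * Real.pi * h)⁻¹ x y)) • a (x, ξ)) * u y := by
    intro y ξ
    rw [Circle.smul_def, Real.fourierChar_apply, smul_eq_mul, mul_comm Complex.I]
    congr 5
    rw [LL_apply, WW]
    simp only [Prod.smul_fst, Prod.smul_snd, Prod.fst_sub, Prod.snd_sub, inner_smul_right,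
      inner_sub_right, sub_zero, smul_eq_mul]
    rw [real_inner_comm ξ.1 x.1, real_inner_comm ξ.1 y.1]
    field_simp
    ring
  have hai : Integrable (fun ξ : V m => a (x, ξ)) := by
    obtain ⟨D, hD, hb⟩ := symbol_bound m 0 (m + 2) a
    have hint : Integrable (fun v : V m => (1 + ‖v‖) ^ (-((m + 2 : ℕ):ℝ))) :=
      integrable_one_add_norm (by rw [finrank_V]; push_cast; linarith)
    refine (hint.const_mul (D * (1 + ‖x.2‖) ^ (-(2:ℝ)))).mono' ?_
      (.of_forall fun v => by simpa using hb x 0 le_rfl v)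
    exact (a.continuous.comp (by fun_prop)).aestronglyMeasurable
  have hi : Integrable (fun p : V m × V m => Complex.exp (Complex.I *
        Complex.ofReal ((⟪x.1, p.2.1⟫ - (⟪p.1.1, p.2.1⟫ + p.1.2 * p.2.2)) / h)) *
      a (x, p.2) * u p.1) (volume.prod volume) := by
    have h1 := (u.integrable (μ := volume)).mul_prod hai
    refine h1.mono ?_ (.of_forall fun p => ?_)
    · have := a.continuous
      have := u.continuous
      exact Continuous.aestronglyMeasurable (by fun_prop)
    · rw [norm_mul, norm_mul, norm_mul, mul_comm Complex.I, Complex.norm_exp_ofReal_mul_I, one_mul,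
        mul_comm]
  rw [Measure.volume_eq_prod (V m) (V m), integral_prod _ hi]
  refine integral_congr_ae (.of_forall fun y => ?_)
  simp only [hp]
  rw [integral_mul_const]

theorem main_kernel (m : ℕ) (a : SchwartzMap (V m × V m) ℂ) :
    ∃ A : ℝ, 0 ≤ A ∧ ∀ x w : V m, ‖∫ ξ, Real.fourierChar (-LL m ξ w) • a (x, ξ)‖ ≤
      A * (1 + ‖x.2‖) ^ (-(2:ℝ)) * (1 + ‖w‖) ^ (-((m + 2 : ℕ):ℝ)) := by
  obtain ⟨D, hD, hb⟩ := symbol_bound m (m + 2) (m + 2) a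
  refine ⟨D * (2 ^ (m + 2) * (1 + 2 ^ (m + 2) * ((m + 2 : ℕ) + 1)) *
    ∫ v : V m, (1 + ‖v‖) ^ (-((m + 2 : ℕ):ℝ))), ?_, fun x w => ?_⟩
  · have : 0 ≤ ∫ v : V m, (1 + ‖v‖) ^ (-((m + 2 : ℕ):ℝ)) := integral_nonneg fun v => by positivity
    positivity
  · have h := fourier_decay m (m + 2) (fun ξ => a (x, ξ))
      ((a.smooth ⊤).comp (contDiff_const.prodMk contDiff_id)) (D * (1 + ‖x.2‖) ^ (-(2:ℝ)))
      (by positivity) ((m + 2 : ℕ):ℝ) (by rw [finrank_V]; push_cast; linarith) (hb x) w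
    rw [Real.rpow_neg (y := ((m + 2 : ℕ):ℝ)) (by positivity : 0 ≤ 1 + ‖w‖), Real.rpow_natCast,
      ← div_eq_mul_inv, le_div_iff₀ (by positivity), mul_comm]
    refine h.trans_eq ?_
    ring

/-- for every Schwartz symbol `a` there is `C > 0` such that for all `h ∈ (0,1]`
and all Schwartz `u`, `‖Op_h^Λ(a)u‖_{L²} ≤ C h^{-1/2} ‖u‖_{L²}`. -/
theorem stmt_2 (m : ℕ) (a : SchwartzMap (V m × V m) ℂ) :
    ∃ C > 0, ∀ h : ℝ, 0 < h → h ≤ 1 → ∀ u : SchwartzMap (V m) ℂ,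
      eLpNorm (OpL m h ⇑a ⇑u) 2 volume ≤
        ENNReal.ofReal (C * h ^ (-(1/2 : ℝ))) * eLpNorm (⇑u) 2 volume := by
  obtain ⟨A, hA0, hA⟩ := main_kernel m a
  set r : ℝ := ((m + 2 : ℕ):ℝ) with hr
  set J : ℝ≥0∞ := ∫⁻ v : V m, ENNReal.ofReal ((1 + ‖v‖) ^ (-r)) with hJ
  set J1 : ℝ≥0∞ := ∫⁻ v : EuclideanSpace ℝ (Fin m), ENNReal.ofReal ((1 + ‖v‖) ^ (-r)) with hJ1
  set J2 : ℝ≥0∞ := ∫⁻ v : ℝ, ENNReal.ofReal ((1 + ‖v‖) ^ (-(2:ℝ))) with hJ2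
  have tJ : J ≠ ⊤ :=
    (finite_integral_one_add_norm (by rw [finrank_V, hr]; push_cast; linarith)).ne
  have tJ1 : J1 ≠ ⊤ :=
    (finite_integral_one_add_norm (by rw [finrank_euclideanSpace_fin, hr]; push_cast; linarith)).ne
  have tJ2 : J2 ≠ ⊤ := (finite_integral_one_add_norm (by simp)).ne
  set P : ℝ≥0∞ := ENNReal.ofReal A * J * (ENNReal.ofReal A * J1 * J2) with hP
  have tP : P ≠ ⊤ := by
    rw [hP]
    exact ENNReal.mul_ne_top (ENNReal.mul_ne_top ENNReal.ofReal_ne_top tJ)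
      (ENNReal.mul_ne_top (ENNReal.mul_ne_top ENNReal.ofReal_ne_top tJ1) tJ2)
  refine ⟨Real.sqrt P.toReal + 1, by positivity, ?_⟩
  intro h hh _ u
  set c : ℝ := (2 * Real.pi * h)⁻¹ with hc
  have hc0 : 0 < c := by positivity
  have hch : c ≤ h⁻¹ := by
    rw [hc]
    apply inv_anti₀ hh
    nlinarith [Real.pi_gt_three]
  set k : V m → V m → ℝ≥0∞ := fun x y => ENNReal.ofReal (c ^ (m + 1) *
    (A * (1 + ‖x.2‖) ^ (-(2:ℝ)) * (1 + ‖WW m c x y‖) ^ (-r))) with hk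
  have mk : Measurable (Function.uncurry k) := by
    simp only [hk, WW]
    unfold Function.uncurry
    fun_prop
  have hT : ∀ x, ‖OpL m h a u x‖ₑ ≤ ∫⁻ y, k x y * ‖u y‖ₑ := by
    intro x
    rw [OpL_eq m a h hh u x, ← hc, ← inv_pow, ← hc, enorm_smul]
    have e0 : ‖c ^ (m + 1)‖ₑ = ENNReal.ofReal (c ^ (m + 1)) :=
      Real.enorm_of_nonneg (by positivity)
    rw [e0]
    calc _ ≤ ENNReal.ofReal (c ^ (m + 1)) * ∫⁻ y, ‖(∫ ξ, Real.fourierChar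
          (-LL m ξ (WW m c x y)) • a (x, ξ)) * u y‖ₑ := by
            gcongr; exact enorm_integral_le_lintegral_enorm _
      _ = ∫⁻ y, ENNReal.ofReal (c ^ (m + 1)) * ‖(∫ ξ, Real.fourierChar
          (-LL m ξ (WW m c x y)) • a (x, ξ)) * u y‖ₑ :=
            (lintegral_const_mul' _ _ ENNReal.ofReal_ne_top).symm
      _ ≤ _ := by
        refine lintegral_mono fun y => ?_
        rw [enorm_mul, ← mul_assoc, hk]
        gcongr
        beta_reduce
        rw [ENNReal.ofReal_mul (by positivity)]
        gcongr
        rw [← ofReal_norm_eq_enorm]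
        exact ENNReal.ofReal_le_ofReal (hA x _)
  have hAA : ∀ x, ∫⁻ y, k x y ≤ ENNReal.ofReal A * J := by
    intro x
    have hm : Measurable fun v : V m => ENNReal.ofReal ((1 + ‖v‖) ^ (-r)) := by fun_prop
    calc ∫⁻ y, k x y ≤ ∫⁻ y, ENNReal.ofReal (c ^ (m + 1) * A) *
          ENNReal.ofReal ((1 + ‖c • (y - (x.1, (0:ℝ)))‖) ^ (-r)) := by
            gcongr with y
            rw [hk, ← ENNReal.ofReal_mul (by positivity)]
            apply ENNReal.ofReal_le_ofReal
            rw [← mul_assoc]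
            have : (1 + ‖x.2‖) ^ (-(2:ℝ)) ≤ 1 :=
              Real.rpow_le_one_of_one_le_of_nonpos (by simp) (by norm_num)
            simp only [WW]
            gcongr ?_ * _
            gcongr
            exact mul_le_of_le_one_right hA0 this
      _ = ENNReal.ofReal (c ^ (m + 1) * A) * (ENNReal.ofReal ((c ^ (m + 1))⁻¹) * J) := by
            rw [lintegral_const_mul' _ _ ENNReal.ofReal_ne_top,
              lintegral_scale volume _ hm c hc0 (x.1, (0:ℝ)), finrank_V]
      _ = _ := by
            rw [← mul_assoc, ← ENNReal.ofReal_mul (by positivity)]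
            congr 2
            field_simp
  have hBB : ∀ y, ∫⁻ x, k x y ≤ ENNReal.ofReal c * (ENNReal.ofReal A * J1 * J2) := by
    intro y
    have hm : Measurable fun v : EuclideanSpace ℝ (Fin m) =>
      ENNReal.ofReal ((1 + ‖v‖) ^ (-r)) := by fun_prop
    calc ∫⁻ x, k x y ≤ ∫⁻ x : V m, ENNReal.ofReal (c ^ (m + 1) * A) *
          (ENNReal.ofReal ((1 + ‖c • (x.1 - y.1)‖) ^ (-r)) *
            ENNReal.ofReal ((1 + ‖x.2‖) ^ (-(2:ℝ)))) := by
            gcongr with x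
            rw [hk, ← ENNReal.ofReal_mul (by positivity), ← ENNReal.ofReal_mul (by positivity)]
            apply ENNReal.ofReal_le_ofReal
            have h1 : ‖c • (x.1 - y.1)‖ ≤ ‖WW m c x y‖ := by
              refine le_trans (le_of_eq ?_) (norm_fst_le _)
              simp [WW, norm_smul, norm_sub_rev]
            have h2 : (1 + ‖WW m c x y‖) ^ (-r) ≤ (1 + ‖c • (x.1 - y.1)‖) ^ (-r) :=
              Real.rpow_le_rpow_of_nonpos (by positivity) (by gcongr) (by rw [hr]; simp only [Left.neg_nonpos_iff]; positivity)
            calc _ ≤ c ^ (m + 1) * (A * (1 + ‖x.2‖) ^ (-(2:ℝ)) *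
                  (1 + ‖c • (x.1 - y.1)‖) ^ (-r)) := by gcongr
              _ = _ := by ring
      _ = ENNReal.ofReal (c ^ (m + 1) * A) * ((ENNReal.ofReal ((c ^ m)⁻¹) * J1) * J2) := by
            rw [lintegral_const_mul' _ _ ENNReal.ofReal_ne_top, Measure.volume_eq_prod,
              lintegral_prod_mul (f := fun v : EuclideanSpace ℝ (Fin m) =>
                ENNReal.ofReal ((1 + ‖c • (v - y.1)‖) ^ (-r)))
                (g := fun t : ℝ => ENNReal.ofReal ((1 + ‖t‖) ^ (-(2:ℝ))))
                (by fun_prop) (by fun_prop),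
              lintegral_scale volume _ hm c hc0 y.1, finrank_euclideanSpace_fin]
      _ = _ := by
            rw [← mul_assoc, ← mul_assoc, ← mul_assoc, ← mul_assoc,
              ← ENNReal.ofReal_mul (by positivity), ← ENNReal.ofReal_mul (by positivity)]
            congr 3
            field_simp
            ring
  have main := schur_bound volume k mk (fun y => ‖u y‖ₑ) u.continuous.measurable.enorm
    (fun x => ‖OpL m h a u x‖ₑ) hT _ _ hAA hBB
  rw [eLpNorm_eq_lintegral_rpow_enorm_toReal two_ne_zero ENNReal.ofNat_ne_top,
    eLpNorm_eq_lintegral_rpow_enorm_toReal two_ne_zero ENNReal.ofNat_ne_top]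
  simp only [ENNReal.toReal_ofNat]
  set C := Real.sqrt P.toReal + 1 with hC
  have hfin : ENNReal.ofReal A * J * (ENNReal.ofReal c * (ENNReal.ofReal A * J1 * J2)) ≤
      ENNReal.ofReal (C * h ^ (-(1/2 : ℝ))) ^ (2:ℝ) := by
    calc _ = P * ENNReal.ofReal c := by rw [hP]; ring
      _ = ENNReal.ofReal (P.toReal * c) := by
          rw [ENNReal.ofReal_mul (by positivity), ENNReal.ofReal_toReal tP]
      _ ≤ ENNReal.ofReal ((C * h ^ (-(1/2 : ℝ))) ^ (2:ℝ)) := by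
          apply ENNReal.ofReal_le_ofReal
          rw [Real.mul_rpow (by positivity) (by positivity), ← Real.rpow_mul hh.le]
          norm_num
          rw [Real.rpow_neg_one]
          have : P.toReal ≤ C ^ 2 := by
            have := Real.sq_sqrt (ENNReal.toReal_nonneg (a := P))
            nlinarith [Real.sqrt_nonneg P.toReal]
          gcongr
      _ = _ := by rw [ENNReal.ofReal_rpow_of_nonneg (by positivity) (by norm_num)]
  calc _ ≤ (ENNReal.ofReal (C * h ^ (-(1/2 : ℝ))) ^ (2:ℝ) *
        ∫⁻ y, ‖u y‖ₑ ^ (2:ℝ)) ^ (1 / 2 : ℝ) := by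
          gcongr
          exact main.trans (by gcongr)
    _ = _ := by
      rw [ENNReal.mul_rpow_of_nonneg _ _ (by norm_num), ← ENNReal.rpow_mul]
      norm_num
end

section
/- For every f ∈ 𝒮(ℝⁿ), ‖Ξ₀ f‖_{L²(ℝⁿ)} ≤ 2 ‖∂_{x_n} f‖_{L²(ℝⁿ)}. In particular, Ξ₀ extends to a bounded operator from the Sobolev space H¹(ℝⁿ) to L²(ℝⁿ). -/
open MeasureTheory

lemma aux_weight : ∫⁻ t in Set.Ioc (0:ℝ) 1, ENNReal.ofReal (t ^ (-(1/2):ℝ)) = 2 := by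
  have hi : IntervalIntegrable (fun t : ℝ => t ^ (-(1/2):ℝ)) volume 0 1 :=
    intervalIntegral.intervalIntegrable_rpow' (by norm_num)
  rw [← ofReal_integral_eq_lintegral_ofReal]
  · rw [← intervalIntegral.integral_of_le zero_le_one, integral_rpow (Or.inl (by norm_num))]
    norm_num
  · exact (intervalIntegrable_iff_integrableOn_Ioc_of_le zero_le_one).1 hi
  · filter_upwards [ae_restrict_mem measurableSet_Ioc] with t ht
    exact Real.rpow_nonneg ht.1.le _

lemma aux_scale (u : ℝ → ENNReal) (hu : Measurable u) (t : ℝ) (ht : 0 < t) :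
    ∫⁻ s, u (t * s) = ENNReal.ofReal t⁻¹ * ∫⁻ s, u s := by
  have h := Real.map_volume_mul_left ht.ne'
  rw [← lintegral_map hu (measurable_const_mul t), h, lintegral_smul_measure,
    abs_of_pos (inv_pos.2 ht), smul_eq_mul]

lemma aux_cs (v : ℝ → ENNReal) (hv : Measurable v) :
    (∫⁻ t in Set.Ioc (0:ℝ) 1, v t) ^ (2:ℝ) ≤
      2 * ∫⁻ t in Set.Ioc (0:ℝ) 1, ENNReal.ofReal (t ^ (1/2:ℝ)) * v t ^ (2:ℝ) := by
  have h := ENNReal.lintegral_mul_le_Lp_mul_Lq (volume.restrict (Set.Ioc (0:ℝ) 1))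
    (p := 2) (q := 2) Real.HolderConjugate.two_two
    (f := fun t => ENNReal.ofReal (t ^ (-(1/4):ℝ)))
    (g := fun t => ENNReal.ofReal (t ^ (1/4:ℝ)) * v t) (by fun_prop) (by fun_prop)
  have e1 : ∫⁻ t in Set.Ioc (0:ℝ) 1, ((fun t => ENNReal.ofReal (t ^ (-(1/4):ℝ))) *
      (fun t => ENNReal.ofReal (t ^ (1/4:ℝ)) * v t)) t = ∫⁻ t in Set.Ioc (0:ℝ) 1, v t := by
    refine setLIntegral_congr_fun measurableSet_Ioc fun t ht => ?_
    simp only [Pi.mul_apply]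
    rw [← mul_assoc, ← ENNReal.ofReal_mul (Real.rpow_nonneg ht.1.le _), ← Real.rpow_add ht.1]
    norm_num
  have e2 : ∫⁻ t in Set.Ioc (0:ℝ) 1, ENNReal.ofReal (t ^ (-(1/4):ℝ)) ^ (2:ℝ) = 2 := by
    rw [← aux_weight]
    refine setLIntegral_congr_fun measurableSet_Ioc fun t ht => ?_
    rw [ENNReal.ofReal_rpow_of_nonneg (Real.rpow_nonneg ht.1.le _) (by norm_num),
      ← Real.rpow_mul ht.1.le]
    norm_num
  have e3 : ∫⁻ t in Set.Ioc (0:ℝ) 1, (ENNReal.ofReal (t ^ (1/4:ℝ)) * v t) ^ (2:ℝ) =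
      ∫⁻ t in Set.Ioc (0:ℝ) 1, ENNReal.ofReal (t ^ (1/2:ℝ)) * v t ^ (2:ℝ) := by
    refine setLIntegral_congr_fun measurableSet_Ioc fun t ht => ?_
    rw [ENNReal.mul_rpow_of_nonneg _ _ (by norm_num),
      ENNReal.ofReal_rpow_of_nonneg (Real.rpow_nonneg ht.1.le _) (by norm_num),
      ← Real.rpow_mul ht.1.le]
    norm_num
  rw [e1, e2, e3] at h
  have h2 := ENNReal.rpow_le_rpow h (z := 2) (by norm_num)
  rw [ENNReal.mul_rpow_of_nonneg _ _ (by norm_num), ← ENNReal.rpow_mul, ← ENNReal.rpow_mul] at h2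
  norm_num at h2 ⊢
  exact h2

lemma aux_main (m : ℕ) (G : EuclideanSpace ℝ (Fin m) × ℝ → ENNReal) (hG : Measurable G) :
    ∫⁻ x : EuclideanSpace ℝ (Fin m) × ℝ, (∫⁻ t in Set.Ioc (0:ℝ) 1, G (x.1, t * x.2)) ^ (2:ℝ) ≤
      4 * ∫⁻ x, G x ^ (2:ℝ) := by
  calc _ ≤ ∫⁻ x : EuclideanSpace ℝ (Fin m) × ℝ, 2 * ∫⁻ t in Set.Ioc (0:ℝ) 1,
        ENNReal.ofReal (t ^ (1/2:ℝ)) * G (x.1, t * x.2) ^ (2:ℝ) :=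
        lintegral_mono fun x => aux_cs (fun t => G (x.1, t * x.2)) (by fun_prop)
    _ = 2 * ∫⁻ x : EuclideanSpace ℝ (Fin m) × ℝ, ∫⁻ t in Set.Ioc (0:ℝ) 1,
        ENNReal.ofReal (t ^ (1/2:ℝ)) * G (x.1, t * x.2) ^ (2:ℝ) :=
        lintegral_const_mul' _ _ (by simp)
    _ = 2 * ∫⁻ t in Set.Ioc (0:ℝ) 1, ∫⁻ x : EuclideanSpace ℝ (Fin m) × ℝ,
        ENNReal.ofReal (t ^ (1/2:ℝ)) * G (x.1, t * x.2) ^ (2:ℝ) := by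
        rw [lintegral_lintegral_swap]
        apply Measurable.aemeasurable
        unfold Function.uncurry
        fun_prop
    _ = 2 * ∫⁻ t in Set.Ioc (0:ℝ) 1,
        ENNReal.ofReal (t ^ (-(1/2):ℝ)) * ∫⁻ x, G x ^ (2:ℝ) := by
        congr 1
        refine setLIntegral_congr_fun measurableSet_Ioc fun t ht => ?_
        rw [lintegral_const_mul' _ _ (by simp), Measure.volume_eq_prod,
          lintegral_prod _ (by fun_prop), lintegral_prod _ (by fun_prop)]
        simp_rw [fun a => aux_scale (fun s => G (a, s) ^ (2:ℝ)) (by fun_prop) t ht.1]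
        rw [lintegral_const_mul' _ _ (by simp), ← mul_assoc,
          ← ENNReal.ofReal_mul (Real.rpow_nonneg ht.1.le _), ← Real.rpow_neg_one,
          ← Real.rpow_add ht.1]
        norm_num
    _ = _ := by
        rw [lintegral_mul_const _ (by fun_prop), aux_weight, ← mul_assoc]
        norm_num

/-- with `Ξ₀f(x', xₙ) = ∫₀¹ (∂_{xₙ}f)(x', t xₙ) dt`, for every Schwartz `f`
one has `‖Ξ₀ f‖_{L²(ℝⁿ)} ≤ 2 ‖∂_{xₙ} f‖_{L²(ℝⁿ)}`.  Points of `ℝⁿ` (`n = m+1 ≥ 1`) are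
written `(x', xₙ) ∈ ℝ^{n-1} × ℝ`. -/
theorem stmt_3 (m : ℕ) (f : SchwartzMap (EuclideanSpace ℝ (Fin m) × ℝ) ℂ) :
    eLpNorm (fun x : EuclideanSpace ℝ (Fin m) × ℝ =>
        ∫ t in (0:ℝ)..1, deriv (fun s : ℝ => f (x.1, s)) (t * x.2)) 2 volume ≤
      2 * eLpNorm (fun x : EuclideanSpace ℝ (Fin m) × ℝ =>
        deriv (fun s : ℝ => f (x.1, s)) x.2) 2 volume := by
  have hm : Measurable (fun x : EuclideanSpace ℝ (Fin m) × ℝ =>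
        deriv (fun s : ℝ => f (x.1, s)) x.2) :=
    measurable_deriv_with_param (f := fun a s => f (a, s)) f.continuous
  have key := aux_main m (fun x => ‖deriv (fun s : ℝ => f (x.1, s)) x.2‖ₑ) hm.enorm
  rw [eLpNorm_eq_lintegral_rpow_enorm_toReal (by simp) (by simp),
    eLpNorm_eq_lintegral_rpow_enorm_toReal (by simp) (by simp)]
  simp only [ENNReal.toReal_ofNat]
  have h4 : (4:ENNReal) ^ (1/2:ℝ) = 2 := by
    rw [show (4:ENNReal) = 2 ^ (2:ℝ) by norm_num, ← ENNReal.rpow_mul]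
    norm_num
  have h5 : ∀ c : ENNReal, 2 * c ^ (1/2:ℝ) = (4 * c) ^ (1/2:ℝ) := fun c => by
    rw [ENNReal.mul_rpow_of_nonneg _ _ (by norm_num), h4]
  rw [h5]
  refine ENNReal.rpow_le_rpow (le_trans (lintegral_mono fun x => ?_) key) (by norm_num)
  refine ENNReal.rpow_le_rpow ?_ (by norm_num)
  rw [intervalIntegral.integral_of_le zero_le_one]
  exact enorm_integral_le_lintegral_enorm _
end

section
/- Let a, b ∈ 𝒮(ℝ^{2n}) and define c ∈ 𝒮(ℝ^{2n}) by c(x,ξ) = b(x, ξ', 0) · a(x,ξ). Then there exists C > 0 such that for all h ∈ (0,1] and all u ∈ 𝒮(ℝⁿ), ‖(Op_h(b) ∘ Op_h^Λ(a))u − Op_h^Λ(c)u‖_{L²(ℝⁿ)} ≤ C h^{1/2} ‖u‖_{L²(ℝⁿ)}. -/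
open MeasureTheory
open scoped RealInnerProductSpace

/-- The standard quantization `Op_h(b)u(x) = (2πh)^{-n} ∫ e^{(i/h)(x−y)·ξ} b(x,ξ) u(y) dy dξ`. -/
noncomputable def OpS (m : ℕ) (h : ℝ) (b : V m × V m → ℂ) (u : V m → ℂ) (x : V m) : ℂ :=
  ((2 * Real.pi * h) ^ (m + 1))⁻¹ •
    ∫ p : V m × V m,
      Complex.exp (Complex.I *
        Complex.ofReal ((⟪x.1 - p.1.1, p.2.1⟫ + (x.2 - p.1.2) * p.2.2) / h)) *
      b (x, p.2) * u p.1


namespace S7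
open scoped SchwartzMap FourierTransform

abbrev E (m : ℕ) : Type := WithLp 2 (EuclideanSpace ℝ (Fin m) × ℝ)

noncomputable def eqv (m : ℕ) : E m ≃L[ℝ] V m := WithLp.prodContinuousLinearEquiv 2 ℝ _ _

noncomputable def dot {m : ℕ} (z ξ : V m) : ℝ := ⟪z.1, ξ.1⟫ + z.2 * ξ.2

noncomputable def IF (m : ℕ) : 𝓢(V m, ℂ) →L[ℂ] 𝓢(V m, ℂ) :=
  (SchwartzMap.compCLMOfContinuousLinearEquiv ℂ (eqv m).symm).comp
    ((FourierTransform.fourierInvCLM ℂ 𝓢(E m, ℂ)).comp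
      (SchwartzMap.compCLMOfContinuousLinearEquiv ℂ (eqv m)))

noncomputable def FF (m : ℕ) : 𝓢(V m, ℂ) →L[ℂ] 𝓢(V m, ℂ) :=
  (SchwartzMap.compCLMOfContinuousLinearEquiv ℂ (eqv m).symm).comp
    ((FourierTransform.fourierCLM ℂ 𝓢(E m, ℂ)).comp
      (SchwartzMap.compCLMOfContinuousLinearEquiv ℂ (eqv m)))

lemma IF_apply (m : ℕ) (f : 𝓢(V m, ℂ)) (z : V m) :
    IF m f z = ∫ ξ : V m, Complex.exp (Complex.I * Complex.ofReal (2 * Real.pi * dot z ξ)) * f ξ := by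
  simp only [IF, ContinuousLinearMap.comp_apply, SchwartzMap.compCLMOfContinuousLinearEquiv_apply,
    Function.comp_apply, FourierTransform.fourierInvCLM_apply, SchwartzMap.fourierInv_coe]
  rw [Real.fourierInv_eq']
  have := (WithLp.volume_preserving_ofLp (EuclideanSpace ℝ (Fin m)) ℝ).integral_comp
    (MeasurableEquiv.toLp 2 _).symm.measurableEmbedding
    (fun ξ : V m => Complex.exp (Complex.I * Complex.ofReal (2 * Real.pi * dot z ξ)) * f ξ)
  rw [← this]
  congr 1
  ext v
  simp only [Function.comp_apply, smul_eq_mul]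
  congr 2
  simp [eqv, dot, real_inner_comm]
  ring

lemma FF_IF (m : ℕ) (f : 𝓢(V m, ℂ)) : FF m (IF m f) = f := by
  have h1 : ∀ g : 𝓢(E m, ℂ), SchwartzMap.compCLMOfContinuousLinearEquiv ℂ (eqv m)
      (SchwartzMap.compCLMOfContinuousLinearEquiv ℂ (eqv m).symm g) = g := by
    intro g; ext x; simp
  have h2 : ∀ g : 𝓢(V m, ℂ), SchwartzMap.compCLMOfContinuousLinearEquiv ℂ (eqv m).symm
      (SchwartzMap.compCLMOfContinuousLinearEquiv ℂ (eqv m) g) = g := by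
    intro g; ext x; simp
  simp only [FF, IF, ContinuousLinearMap.comp_apply, h1, FourierTransform.fourierInvCLM_apply,
    FourierTransform.fourierCLM_apply, FourierTransform.fourier_fourierInv_eq, h2]

lemma FF_apply (m : ℕ) (f : 𝓢(V m, ℂ)) (z : V m) :
    FF m f z = ∫ ξ : V m, Complex.exp (Complex.I * Complex.ofReal (-2 * Real.pi * dot z ξ)) * f ξ := by
  simp only [FF, ContinuousLinearMap.comp_apply, SchwartzMap.compCLMOfContinuousLinearEquiv_apply,
    Function.comp_apply, FourierTransform.fourierCLM_apply, SchwartzMap.fourier_coe]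
  rw [Real.fourier_eq']
  have := (WithLp.volume_preserving_ofLp (EuclideanSpace ℝ (Fin m)) ℝ).integral_comp
    (MeasurableEquiv.toLp 2 _).symm.measurableEmbedding
    (fun ξ : V m => Complex.exp (Complex.I * Complex.ofReal (-2 * Real.pi * dot z ξ)) * f ξ)
  rw [← this]
  congr 1
  ext v
  simp only [Function.comp_apply, smul_eq_mul]
  congr 2
  simp [eqv, dot, real_inner_comm]
  ring

end S7

namespace S7
open scoped SchwartzMap FourierTransform

lemma sl_growth {m : ℕ} (x : V m) : (fun ξ : V m => ((x, ξ) : V m × V m)).HasTemperateGrowth := by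
  have : (fun ξ : V m => ((x, ξ) : V m × V m)) =
      (fun _ => ((x, 0) : V m × V m)) + fun ξ => ContinuousLinearMap.inr ℝ (V m) (V m) ξ := by
    ext ξ <;> simp
  rw [this]
  exact (Function.HasTemperateGrowth.const _).add (ContinuousLinearMap.hasTemperateGrowth _)

/-- the slice `ξ ↦ a (x, ξ)` -/
noncomputable def sl {m : ℕ} (a : 𝓢(V m × V m, ℂ)) (x : V m) : 𝓢(V m, ℂ) :=
  SchwartzMap.compCLM ℂ (sl_growth x) ⟨1, 1, fun ξ => by
    have : ‖ξ‖ ≤ ‖((x, ξ) : V m × V m)‖ := le_max_right _ _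
    rw [pow_one, one_mul]; linarith⟩ a

@[simp] lemma sl_apply {m : ℕ} (a : 𝓢(V m × V m, ℂ)) (x ξ : V m) : sl a x ξ = a (x, ξ) := rfl

lemma iter_sl_sub {m : ℕ} (a : 𝓢(V m × V m, ℂ)) (l : ℕ) (x y ξ : V m) :
    ‖iteratedFDeriv ℝ l (sl a x - sl a y : 𝓢(V m, ℂ)) ξ‖ ≤
      ‖iteratedFDeriv ℝ l a (x, ξ) - iteratedFDeriv ℝ l a (y, ξ)‖ := by
  set F : V m → V m × V m → ℂ := fun x p => a (p + (x, 0)) with hF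
  have hFs : ∀ x, ContDiff ℝ l (F x) := fun x =>
    (a.smooth l).comp (contDiff_id.add contDiff_const)
  have h1 : ((sl a x - sl a y : 𝓢(V m, ℂ)) : V m → ℂ) =
      (F x - F y) ∘ ContinuousLinearMap.inr ℝ (V m) (V m) := by
    ext ξ
    simp [F]
  have hsub : ContDiff ℝ l (F x - F y) := (hFs x).sub (hFs y)
  rw [h1, ContinuousLinearMap.iteratedFDeriv_comp_right (i := l) _ hsub _ le_rfl]
  refine (ContinuousMultilinearMap.norm_compContinuousLinearMap_le _ _).trans ?_
  have h2 : iteratedFDeriv ℝ l (F x - F y) (ContinuousLinearMap.inr ℝ (V m) (V m) ξ) =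
      iteratedFDeriv ℝ l a (x, ξ) - iteratedFDeriv ℝ l a (y, ξ) := by
    rw [iteratedFDeriv_sub_apply (hFs x).contDiffAt (hFs y).contDiffAt]
    simp only [F]
    rw [iteratedFDeriv_comp_add_right, iteratedFDeriv_comp_add_right]
    simp
  rw [h2]
  refine mul_le_of_le_one_right (norm_nonneg _) ?_
  refine Finset.prod_le_one (fun _ _ => norm_nonneg _) fun _ _ => ?_
  exact ContinuousLinearMap.norm_inr_le_one ℝ (V m) (V m)

lemma iter_sl {m : ℕ} (a : 𝓢(V m × V m, ℂ)) (l : ℕ) (x ξ : V m) :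
    ‖iteratedFDeriv ℝ l (sl a x) ξ‖ ≤ ‖iteratedFDeriv ℝ l a (x, ξ)‖ := by
  set F : V m → V m × V m → ℂ := fun x p => a (p + (x, 0)) with hF
  have hFs : ∀ x, ContDiff ℝ l (F x) := fun x =>
    (a.smooth l).comp (contDiff_id.add contDiff_const)
  have h1 : (sl a x : V m → ℂ) = (F x) ∘ ContinuousLinearMap.inr ℝ (V m) (V m) := by
    ext ξ
    simp [F]
  rw [h1, ContinuousLinearMap.iteratedFDeriv_comp_right (i := l) _ (hFs x) _ le_rfl]
  refine (ContinuousMultilinearMap.norm_compContinuousLinearMap_le _ _).trans ?_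
  have h2 : iteratedFDeriv ℝ l (F x) (ContinuousLinearMap.inr ℝ (V m) (V m) ξ) =
      iteratedFDeriv ℝ l a (x, ξ) := by
    simp only [F]
    rw [iteratedFDeriv_comp_add_right]
    simp
  rw [h2]
  refine mul_le_of_le_one_right (norm_nonneg _) ?_
  refine Finset.prod_le_one (fun _ _ => norm_nonneg _) fun _ _ => ?_
  exact ContinuousLinearMap.norm_inr_le_one ℝ (V m) (V m)

/-- Schwartz decay, convenient form. -/
lemma decay {X : Type*} [NormedAddCommGroup X] [NormedSpace ℝ X] (a : 𝓢(X, ℂ)) (k l : ℕ) :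
    ∃ C : ℝ, 0 ≤ C ∧ ∀ p, (1 + ‖p‖) ^ k * ‖iteratedFDeriv ℝ l a p‖ ≤ C :=
  ⟨2 ^ k * (Finset.Iic (k, l)).sup (fun m => SchwartzMap.seminorm ℝ m.1 m.2) a,
    by positivity, fun p => SchwartzMap.one_add_le_sup_seminorm_apply (m := (k, l)) le_rfl le_rfl a p⟩

lemma decay0 {X : Type*} [NormedAddCommGroup X] [NormedSpace ℝ X] (a : 𝓢(X, ℂ)) (k : ℕ) :
    ∃ C : ℝ, 0 ≤ C ∧ ∀ p, (1 + ‖p‖) ^ k * ‖a p‖ ≤ C := by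
  obtain ⟨C, hC, h⟩ := decay a k 0
  exact ⟨C, hC, fun p => by simpa using h p⟩

/-- seminorm bound for a difference of slices -/
lemma semi_sl_sub {m : ℕ} (a : 𝓢(V m × V m, ℂ)) (k l : ℕ) :
    ∃ C : ℝ, 0 ≤ C ∧ ∀ x v : V m, SchwartzMap.seminorm ℂ k l (sl a (x + v) - sl a x) ≤
      C * (‖v‖ * (1 + ‖v‖) / (1 + ‖x‖)) := by
  obtain ⟨C, hC, h⟩ := decay a (k + 1) (l + 1)
  refine ⟨C, hC, fun x v => SchwartzMap.seminorm_le_bound ℂ k l _ (by positivity) fun ξ => ?_⟩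
  have key : ‖iteratedFDeriv ℝ l a (x + v, ξ) - iteratedFDeriv ℝ l a (x, ξ)‖ ≤
      (C * (1 + ‖v‖) / ((1 + ‖x‖) * (1 + ‖ξ‖) ^ k)) * ‖((x + v, ξ) : V m × V m) - (x, ξ)‖ := by
    refine (convex_segment ((x, ξ) : V m × V m) (x + v, ξ)).norm_image_sub_le_of_norm_fderiv_le
      (𝕜 := ℝ) (fun p _ => ?_) (fun p hp => ?_) (left_mem_segment _ _ _) (right_mem_segment _ _ _)
    · exact ((a.smooth (l + 1)).differentiable_iteratedFDeriv (by exact_mod_cast Nat.lt_succ_self l)) p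
    · rw [norm_fderiv_iteratedFDeriv]
      obtain ⟨s, hs, rfl⟩ := (segment_eq_image' ℝ ((x, ξ) : V m × V m) (x + v, ξ)) ▸ hp
      set p := ((x, ξ) : V m × V m) + s • (((x + v, ξ) : V m × V m) - (x, ξ)) with hpdef
      have hp1 : p = (x + s • v, ξ) := by ext <;> simp [hpdef]
      have hx : 1 + ‖x‖ ≤ (1 + ‖p‖) * (1 + ‖v‖) := by
        have h1 : ‖x + s • v‖ ≤ ‖p‖ := by rw [hp1]; exact le_max_left _ _
        have h2 : ‖x‖ ≤ ‖x + s • v‖ + ‖s • v‖ := by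
          simpa using norm_sub_le (x + s • v) (s • v)
        have h3 : ‖s • v‖ ≤ ‖v‖ := by
          rw [norm_smul, Real.norm_of_nonneg hs.1]
          exact mul_le_of_le_one_left (norm_nonneg _) hs.2
        nlinarith [norm_nonneg p, norm_nonneg v]
      have hξ : 1 + ‖ξ‖ ≤ 1 + ‖p‖ := by
        have : ‖ξ‖ ≤ ‖p‖ := by rw [hp1]; exact le_max_right _ _
        linarith
      rw [le_div_iff₀ (by positivity)]
      calc _ ≤ ‖iteratedFDeriv ℝ (l + 1) a p‖ * (((1 + ‖p‖) * (1 + ‖v‖)) * (1 + ‖p‖) ^ k) := by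
            gcongr
        _ = ((1 + ‖p‖) ^ (k + 1) * ‖iteratedFDeriv ℝ (l + 1) a p‖) * (1 + ‖v‖) := by ring
        _ ≤ _ := by gcongr; exact h p
  have hn : ‖((x + v, ξ) : V m × V m) - (x, ξ)‖ = ‖v‖ := by
    simp [Prod.norm_def]
  rw [hn] at key
  calc _ ≤ (1 + ‖ξ‖) ^ k * ((C * (1 + ‖v‖) / ((1 + ‖x‖) * (1 + ‖ξ‖) ^ k)) * ‖v‖) := by
        gcongr
        · linarith
        · exact (iter_sl_sub a l _ _ ξ).trans key
    _ = _ := by field_simp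

lemma semi_sl {m : ℕ} (a : 𝓢(V m × V m, ℂ)) (k l : ℕ) :
    ∃ C : ℝ, 0 ≤ C ∧ ∀ x : V m, SchwartzMap.seminorm ℂ k l (sl a x) ≤ C * 1 := by
  obtain ⟨C, hC, h⟩ := decay a k l
  refine ⟨C, hC, fun x => SchwartzMap.seminorm_le_bound ℂ k l _ (by positivity) fun ξ => ?_⟩
  have : ‖ξ‖ ≤ ‖((x, ξ) : V m × V m)‖ := le_max_right _ _
  calc _ ≤ (1 + ‖((x, ξ) : V m × V m)‖) ^ k * ‖iteratedFDeriv ℝ l a (x, ξ)‖ := by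
        gcongr
        · linarith
        · exact iter_sl a l x ξ
    _ ≤ _ := by rw [mul_one]; exact h _

/-- continuity of `IF`, applied to a family with seminorm control -/
lemma IF_family {m : ℕ} {ι : Type*} (f : ι → 𝓢(V m, ℂ)) (w : ι → ℝ) (hw : ∀ i, 0 ≤ w i)
    (hf : ∀ k l : ℕ, ∃ C : ℝ, 0 ≤ C ∧ ∀ i, SchwartzMap.seminorm ℂ k l (f i) ≤ C * w i) (k : ℕ) :
    ∃ C : ℝ, 0 ≤ C ∧ ∀ i z, (1 + ‖z‖) ^ k * ‖IF m (f i) z‖ ≤ C * w i := by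
  set q : Seminorm ℂ 𝓢(V m, ℂ) :=
    ((Finset.Iic (k, 0)).sup (schwartzSeminormFamily ℂ (V m) ℂ)).comp (IF m).toLinearMap with hq
  have hqc : Continuous q := by
    have h1 : Continuous (((Finset.Iic (k, 0)).sup (schwartzSeminormFamily ℂ (V m) ℂ) :
        Seminorm ℂ 𝓢(V m, ℂ))) :=
      (schwartz_withSeminorms ℂ (V m) ℂ).finset_sups.continuous_seminorm (Finset.Iic (k, 0))
    exact h1.comp (IF m).continuous
  obtain ⟨s, C, -, hC⟩ := Seminorm.bound_of_continuous (schwartz_withSeminorms ℂ (V m) ℂ) q hqc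
  choose D hD0 hD using hf
  refine ⟨2 ^ k * (C * ∑ i ∈ s, D i.1 i.2), by
    have : 0 ≤ ∑ i ∈ s, D i.1 i.2 := Finset.sum_nonneg fun i _ => hD0 _ _
    positivity, fun i z => ?_⟩
  have h1 := SchwartzMap.one_add_le_sup_seminorm_apply (𝕜 := ℂ) (m := (k, 0)) (k := k) (n := 0)
    le_rfl le_rfl (IF m (f i)) z
  rw [norm_iteratedFDeriv_zero] at h1
  refine h1.trans ?_
  have h2 : q (f i) ≤ C * (s.sup (schwartzSeminormFamily ℂ (V m) ℂ)) (f i) := hC (f i)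
  have h3 : (s.sup (schwartzSeminormFamily ℂ (V m) ℂ)) (f i) ≤ (∑ i ∈ s, D i.1 i.2) * w i := by
    refine Seminorm.finset_sup_apply_le ?_ fun j hj => ?_
    · exact mul_nonneg (Finset.sum_nonneg fun i _ => hD0 _ _) (hw i)
    · refine (hD j.1 j.2 i).trans ?_
      gcongr
      · exact hw i
      · exact Finset.single_le_sum (f := fun i => D i.1 i.2) (fun i _ => hD0 _ _) hj
  calc _ = 2 ^ k * q (f i) := rfl
    _ ≤ 2 ^ k * (C * ((∑ i ∈ s, D i.1 i.2) * w i)) := by gcongr; exact h2.trans (by gcongr)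
    _ = _ := by ring

end S7

namespace S7
open scoped SchwartzMap FourierTransform

instance instHaarV (m : ℕ) : (volume : Measure (V m)).IsAddHaarMeasure :=
  inferInstanceAs (((volume : Measure (EuclideanSpace ℝ (Fin m))).prod
    (volume : Measure ℝ)).IsAddHaarMeasure)

noncomputable def AA {m : ℕ} (a : 𝓢(V m × V m, ℂ)) (x z : V m) : ℂ := IF m (sl a x) z

lemma AA_cont {m : ℕ} (a : 𝓢(V m × V m, ℂ)) (x : V m) : Continuous (AA a x) :=
  (IF m (sl a x)).continuous

lemma AA_int {m : ℕ} (a : 𝓢(V m × V m, ℂ)) (x : V m) : Integrable (AA a x) :=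
  (IF m (sl a x)).integrable

lemma sl_int {m : ℕ} (a : 𝓢(V m × V m, ℂ)) (x : V m) : Integrable (fun ξ => a (x, ξ)) :=
  (sl a x).integrable

noncomputable def ph (t : ℝ) : ℂ := Complex.exp (Complex.I * Complex.ofReal t)

lemma ph_norm (t : ℝ) : ‖ph t‖ = 1 := by
  rw [ph, mul_comm]; exact Complex.norm_exp_ofReal_mul_I t

lemma ph_cont : Continuous ph := by unfold ph; fun_prop

lemma ph_add (s t : ℝ) : ph (s + t) = ph s * ph t := by
  simp only [ph, ← Complex.exp_add]; congr 1; push_cast; ring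

lemma dot_cont {m : ℕ} : Continuous (fun p : V m × V m => dot p.1 p.2) := by
  unfold dot; fun_prop

lemma AA_apply {m : ℕ} (a : 𝓢(V m × V m, ℂ)) (x z : V m) :
    AA a x z = ∫ ξ : V m, ph (2 * Real.pi * dot z ξ) * a (x, ξ) := IF_apply m _ z

lemma AA_inv {m : ℕ} (a : 𝓢(V m × V m, ℂ)) (x ξ : V m) :
    a (x, ξ) = ∫ z : V m, ph (-2 * Real.pi * dot ξ z) * AA a x z := by
  rw [← sl_apply, ← FF_IF m (sl a x), FF_apply]; rfl

/-- product of integrable functions times a bounded continuous function -/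
lemma int3 {m : ℕ} {f g : V m → ℂ} {F : V m × V m → ℂ} (hf : Integrable f) (hg : Integrable g)
    (hF : Continuous F) (C : ℝ) (hC : ∀ p, ‖F p‖ ≤ C) :
    Integrable (fun p : V m × V m => F p * (f p.1 * g p.2)) :=
  (hf.mul_prod hg).bdd_mul (c := C) hF.aestronglyMeasurable (Filter.Eventually.of_forall hC)

noncomputable def wv {m : ℕ} (H : ℝ) (x y : V m) : V m := (H⁻¹ • (x.1 - y.1), -(H⁻¹ * y.2))

lemma wv_cont {m : ℕ} (H : ℝ) (x : V m) : Continuous (wv H x) := by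
  unfold wv; fun_prop

lemma OpL_eq {m : ℕ} {h : ℝ} (hh : 0 < h) (a : 𝓢(V m × V m, ℂ)) {u : V m → ℂ} (hu : Integrable u)
    (x : V m) : OpL m h a u x =
      ((2 * Real.pi * h) ^ (m + 1))⁻¹ • ∫ y, AA a x (wv (2 * Real.pi * h) x y) * u y := by
  unfold OpL
  congr 1
  have hphase : ∀ p : V m × V m, (⟪x.1, p.2.1⟫ - (⟪p.1.1, p.2.1⟫ + p.1.2 * p.2.2)) / h =
      2 * Real.pi * dot (wv (2 * Real.pi * h) x p.1) p.2 := by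
    intro p
    have := Real.pi_pos
    simp only [dot, wv, inner_smul_left, inner_sub_left]
    simp
    field_simp
    ring
  have hInteg : Integrable (fun p : V m × V m =>
      ph (2 * Real.pi * dot (wv (2 * Real.pi * h) x p.1) p.2) * (u p.1 * a (x, p.2))) := by
    refine int3 (f := u) (g := fun ξ => a (x, ξ)) hu (sl_int a x) (F := fun p : V m × V m =>
      ph (2 * Real.pi * dot (wv (2 * Real.pi * h) x p.1) p.2)) ?_ 1 fun p => (ph_norm _).le
    refine ph_cont.comp (continuous_const.mul ?_)
    exact dot_cont.comp (((wv_cont _ x).comp continuous_fst).prodMk continuous_snd)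
  calc _ = ∫ p : V m × V m,
      ph (2 * Real.pi * dot (wv (2 * Real.pi * h) x p.1) p.2) * (u p.1 * a (x, p.2)) := by
        congr 1; ext p; rw [hphase, ph]; ring
    _ = _ := by
        rw [Measure.volume_eq_prod] at hInteg ⊢
        rw [integral_prod _ hInteg]
        congr 1; ext y
        rw [AA_apply, ← integral_mul_const]
        congr 1; ext ξ; ring

lemma OpS_eq {m : ℕ} {h : ℝ} (hh : 0 < h) (b : 𝓢(V m × V m, ℂ)) {w : V m → ℂ} (hw : Integrable w)
    (x : V m) : OpS m h b w x = ∫ z, AA b x z * w (x - (2 * Real.pi * h) • z) := by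
  have hH : 0 < 2 * Real.pi * h := by have := Real.pi_pos; positivity
  unfold OpS
  have hphase : ∀ p : V m × V m, (⟪x.1 - p.1.1, p.2.1⟫ + (x.2 - p.1.2) * p.2.2) / h =
      2 * Real.pi * dot ((2 * Real.pi * h)⁻¹ • (x - p.1)) p.2 := by
    intro p
    have := Real.pi_pos
    simp only [dot, Prod.smul_fst, Prod.smul_snd, Prod.fst_sub, Prod.snd_sub, inner_smul_left]
    simp
    field_simp
  have hInteg : Integrable (fun p : V m × V m =>
      ph (2 * Real.pi * dot ((2 * Real.pi * h)⁻¹ • (x - p.1)) p.2) * (w p.1 * b (x, p.2))) := by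
    refine int3 (f := w) (g := fun ξ => b (x, ξ)) hw (sl_int b x) (F := fun p : V m × V m =>
      ph (2 * Real.pi * dot ((2 * Real.pi * h)⁻¹ • (x - p.1)) p.2)) ?_ 1 fun p => (ph_norm _).le
    refine ph_cont.comp (continuous_const.mul ?_)
    exact dot_cont.comp (Continuous.prodMk (by fun_prop) continuous_snd)
  have e1 : (∫ p : V m × V m, Complex.exp (Complex.I *
        Complex.ofReal ((⟪x.1 - p.1.1, p.2.1⟫ + (x.2 - p.1.2) * p.2.2) / h)) *
          b (x, p.2) * w p.1) = ∫ y, AA b x ((2 * Real.pi * h)⁻¹ • (x - y)) * w y := by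
    calc _ = ∫ p : V m × V m,
            ph (2 * Real.pi * dot ((2 * Real.pi * h)⁻¹ • (x - p.1)) p.2) * (w p.1 * b (x, p.2)) := by
          congr 1; ext p; rw [hphase, ph]; ring
      _ = _ := by
        rw [Measure.volume_eq_prod] at hInteg ⊢
        rw [integral_prod _ hInteg]
        congr 1; ext y
        rw [AA_apply, ← integral_mul_const]
        congr 1; ext ξ; ring
  rw [e1]
  have e2 := integral_sub_left_eq_self
    (fun y => AA b x ((2 * Real.pi * h)⁻¹ • (x - y)) * w y) (volume : Measure (V m)) x
  have e3 := Measure.integral_comp_smul (volume : Measure (V m))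
    (fun t => AA b x ((2 * Real.pi * h)⁻¹ • (x - (x - t))) * w (x - t)) (2 * Real.pi * h)
  have hfr : Module.finrank ℝ (V m) = m + 1 := by simp
  rw [e2, hfr, abs_of_pos (by positivity)] at e3
  rw [← e3]
  congr 1; ext z
  rw [sub_sub_cancel, inv_smul_smul₀ hH.ne']

lemma AA_bdd {m : ℕ} (a : 𝓢(V m × V m, ℂ)) (k : ℕ) :
    ∃ C : ℝ, 0 ≤ C ∧ ∀ x z : V m, (1 + ‖z‖) ^ k * ‖AA a x z‖ ≤ C := by
  obtain ⟨C, hC, h⟩ := IF_family (sl a) (fun _ => 1) (fun _ => zero_le_one) (semi_sl a) k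
  exact ⟨C, hC, fun x z => by simpa [AA] using h x z⟩

lemma AA_diff {m : ℕ} (a : 𝓢(V m × V m, ℂ)) (k : ℕ) :
    ∃ C : ℝ, 0 ≤ C ∧ ∀ x v z : V m, (1 + ‖z‖) ^ k * ‖AA a (x + v) z - AA a x z‖ ≤
      C * (‖v‖ * (1 + ‖v‖) / (1 + ‖x‖)) := by
  obtain ⟨C, hC, h⟩ := IF_family (fun p : V m × V m => sl a (p.1 + p.2) - sl a p.1)
    (fun p => ‖p.2‖ * (1 + ‖p.2‖) / (1 + ‖p.1‖)) (fun p => by positivity) (fun k l => by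
      obtain ⟨C, hC, h⟩ := semi_sl_sub a k l
      exact ⟨C, hC, fun p => h p.1 p.2⟩) k
  refine ⟨C, hC, fun x v z => ?_⟩
  have := h (x, v) z
  simpa [AA] using this

lemma AA_conv {m : ℕ} (a b c : 𝓢(V m × V m, ℂ))
    (hc : ∀ x ξ : V m, c (x, ξ) = b (x, (ξ.1, (0:ℝ))) * a (x, ξ)) (x w : V m) :
    AA c x w = ∫ z, AA b x z * AA a x (w - (z.1, 0)) := by
  have hd : ∀ z ξ : V m, 2 * Real.pi * dot (w - (z.1, 0)) ξ =
      2 * Real.pi * dot w ξ + -2 * Real.pi * dot (ξ.1, (0:ℝ)) z := by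
    intro z ξ
    simp only [dot, Prod.fst_sub, Prod.snd_sub, inner_sub_left, real_inner_comm z.1 ξ.1]
    ring
  have hInteg : Integrable (fun p : V m × V m =>
      ph (2 * Real.pi * dot (w - (p.1.1, 0)) p.2) * (AA b x p.1 * a (x, p.2))) := by
    refine int3 (f := AA b x) (g := fun ξ => a (x, ξ)) (AA_int b x) (sl_int a x) (F := fun p : V m × V m =>
      ph (2 * Real.pi * dot (w - (p.1.1, 0)) p.2)) ?_ 1 fun p => (ph_norm _).le
    refine ph_cont.comp (continuous_const.mul ?_)
    exact dot_cont.comp (Continuous.prodMk (by fun_prop) continuous_snd)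
  have hsw := integral_integral_swap (μ := (volume : Measure (V m))) (ν := (volume : Measure (V m)))
    (f := fun z ξ => ph (2 * Real.pi * dot (w - (z.1, 0)) ξ) * (AA b x z * a (x, ξ))) hInteg
  calc AA c x w = ∫ ξ : V m, ∫ z : V m,
        ph (2 * Real.pi * dot (w - (z.1, 0)) ξ) * (AA b x z * a (x, ξ)) := by
        rw [AA_apply]
        congr 1; ext ξ
        rw [hc, AA_inv b x (ξ.1, 0), ← mul_assoc, mul_comm (ph _), mul_assoc, ← integral_mul_const]
        congr 1; ext z
        rw [hd, ph_add]; ring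
    _ = _ := by
        rw [← hsw]
        congr 1; ext z
        rw [AA_apply a, ← integral_const_mul]
        congr 1; ext ξ; ring

end S7

namespace S7
open scoped SchwartzMap FourierTransform

lemma jb_int {X : Type*} [NormedAddCommGroup X] [NormedSpace ℝ X] [FiniteDimensional ℝ X]
    [MeasurableSpace X] [BorelSpace X] (μ : Measure X) [μ.IsAddHaarMeasure] (k : ℕ)
    (hk : Module.finrank ℝ X < k) : Integrable (fun x : X => ((1 + ‖x‖) ^ k)⁻¹) μ := by
  have := integrable_one_add_norm (E := X) (μ := μ) (r := (k : ℝ)) (by exact_mod_cast hk)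
  refine this.congr (Filter.Eventually.of_forall fun x => ?_)
  simp only
  rw [Real.rpow_neg (by positivity), Real.rpow_natCast]

lemma jbV {m : ℕ} : Integrable (fun x : V m => ((1 + ‖x‖) ^ (m + 2))⁻¹) :=
  jb_int _ _ (by simp)

lemma OpL_meas {m : ℕ} (h : ℝ) (a : 𝓢(V m × V m, ℂ)) (u : 𝓢(V m, ℂ)) :
    StronglyMeasurable (OpL m h a u) := by
  unfold OpL
  have hc : Continuous (fun q : V m × (V m × V m) =>
      Complex.exp (Complex.I *
        Complex.ofReal ((⟪q.1.1, q.2.2.1⟫ - (⟪q.2.1.1, q.2.2.1⟫ + q.2.1.2 * q.2.2.2)) / h)) *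
          a (q.1, q.2.2) * u q.2.1) := by
    have ha := a.continuous
    have hu := u.continuous
    fun_prop
  have h1 := hc.stronglyMeasurable.integral_prod_right' (ν := (volume : Measure (V m × V m)))
  exact h1.const_smul (((2 * Real.pi * h) ^ (m + 1))⁻¹)

lemma OpL_bound {m : ℕ} (h : ℝ) (a : 𝓢(V m × V m, ℂ)) (u : 𝓢(V m, ℂ)) :
    ∃ C : ℝ, ∀ x, ‖OpL m h a u x‖ ≤ C * ((1 + ‖x‖) ^ (m + 2))⁻¹ := by
  obtain ⟨C, hC, hd⟩ := decay0 a ((m + 2) + (m + 2))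
  refine ⟨‖((2 * Real.pi * h) ^ (m + 1))⁻¹‖ *
    (C * ∫ p : V m × V m, ‖u p.1‖ * ((1 + ‖p.2‖) ^ (m + 2))⁻¹), fun x => ?_⟩
  unfold OpL
  rw [norm_smul, mul_assoc ‖_‖]
  refine mul_le_mul_of_nonneg_left ?_ (norm_nonneg _)
  have hI : Integrable (fun p : V m × V m => ‖u p.1‖ * ((1 + ‖p.2‖) ^ (m + 2))⁻¹) :=
    Integrable.mul_prod (μ := (volume : Measure (V m))) (ν := (volume : Measure (V m)))
      (f := fun y => ‖u y‖) (g := fun ξ : V m => ((1 + ‖ξ‖) ^ (m + 2))⁻¹) u.integrable.norm jbV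
  have h2 := norm_integral_le_of_norm_le (hI.const_mul (C * ((1 + ‖x‖) ^ (m + 2))⁻¹))
    (f := fun p : V m × V m => Complex.exp (Complex.I *
        Complex.ofReal ((⟪x.1, p.2.1⟫ - (⟪p.1.1, p.2.1⟫ + p.1.2 * p.2.2)) / h)) *
          a (x, p.2) * u p.1) (Filter.Eventually.of_forall fun p => by
      have h1 : ‖a (x, p.2)‖ ≤ C * ((1 + ‖x‖) ^ (m + 2))⁻¹ * ((1 + ‖p.2‖) ^ (m + 2))⁻¹ := by
        have := hd (x, p.2)
        have hx : ‖x‖ ≤ ‖((x, p.2) : V m × V m)‖ := le_max_left _ _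
        have hξ : ‖p.2‖ ≤ ‖((x, p.2) : V m × V m)‖ := le_max_right _ _
        rw [mul_assoc, ← mul_inv, ← div_eq_mul_inv, le_div_iff₀ (by positivity)]
        calc _ ≤ ‖a (x, p.2)‖ * ((1 + ‖((x, p.2) : V m × V m)‖) ^ (m + 2) *
              (1 + ‖((x, p.2) : V m × V m)‖) ^ (m + 2)) := by gcongr
          _ = _ := by rw [← pow_add, mul_comm]
          _ ≤ _ := this
      have he := ph_norm ((⟪x.1, p.2.1⟫ - (⟪p.1.1, p.2.1⟫ + p.1.2 * p.2.2)) / h)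
      rw [ph] at he
      rw [norm_mul, norm_mul, he, one_mul]
      calc _ ≤ C * ((1 + ‖x‖) ^ (m + 2))⁻¹ * ((1 + ‖p.2‖) ^ (m + 2))⁻¹ * ‖u p.1‖ := by gcongr
        _ = _ := by ring)
  refine h2.trans (le_of_eq ?_)
  rw [integral_const_mul]; ring

lemma OpL_int {m : ℕ} (h : ℝ) (a : 𝓢(V m × V m, ℂ)) (u : 𝓢(V m, ℂ)) :
    Integrable (OpL m h a u) := by
  obtain ⟨C, hC⟩ := OpL_bound h a u
  exact (jbV.const_mul C).mono' (OpL_meas h a u).aestronglyMeasurable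
    (Filter.Eventually.of_forall hC)

lemma OpL_bdd {m : ℕ} (h : ℝ) (a : 𝓢(V m × V m, ℂ)) (u : 𝓢(V m, ℂ)) :
    ∃ C : ℝ, ∀ x, ‖OpL m h a u x‖ ≤ C := by
  obtain ⟨C, hC⟩ := OpL_bound h a u
  refine ⟨C, fun x => (hC x).trans ?_⟩
  have hC0 : 0 ≤ C := by
    have := (norm_nonneg _).trans (hC 0)
    simpa using this
  refine mul_le_of_le_one_right hC0 (inv_le_one_of_one_le₀ (one_le_pow₀ ?_))
  linarith [norm_nonneg x]

lemma AA_bdd0 {m : ℕ} (a : 𝓢(V m × V m, ℂ)) : ∃ C : ℝ, ∀ x z : V m, ‖AA a x z‖ ≤ C := by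
  obtain ⟨C, -, h⟩ := AA_bdd a 0
  exact ⟨C, fun x z => by simpa using h x z⟩

lemma AAu_int {m : ℕ} (a : 𝓢(V m × V m, ℂ)) (u : 𝓢(V m, ℂ)) (x s : V m) {w : V m → V m}
    (hw : Continuous w) : Integrable (fun y => AA a x (w y - s) * u y) := by
  obtain ⟨C, h⟩ := AA_bdd0 a
  exact u.integrable.bdd_mul (c := C) ((AA_cont a x).comp (by fun_prop)).aestronglyMeasurable
    (Filter.Eventually.of_forall fun y => h _ _)

lemma wv_shift {m : ℕ} {H : ℝ} (hH : 0 < H) (x y z : V m) :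
    wv H (x - H • z) y = wv H x y - (z.1, 0) := by
  ext1
  · simp only [wv, Prod.fst_sub, Prod.smul_fst]
    rw [sub_right_comm, smul_sub, inv_smul_smul₀ hH.ne']
  · simp [wv]

/-- formula for the difference -/
lemma diff_formula {m : ℕ} (a b c : 𝓢(V m × V m, ℂ))
    (hc : ∀ x ξ : V m, c (x, ξ) = b (x, (ξ.1, (0:ℝ))) * a (x, ξ)) {h : ℝ} (hh : 0 < h)
    (u : 𝓢(V m, ℂ)) (x : V m) :
    OpS m h b (OpL m h a u) x - OpL m h c u x = ∫ z, AA b x z *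
      (((2 * Real.pi * h) ^ (m + 1))⁻¹ • ∫ y,
        (AA a (x - (2 * Real.pi * h) • z) (wv (2 * Real.pi * h) x y - (z.1, 0)) -
          AA a x (wv (2 * Real.pi * h) x y - (z.1, 0))) * u y) := by
  set H := 2 * Real.pi * h with hHdef
  have hH : 0 < H := by have := Real.pi_pos; positivity
  have hui := u.integrable (μ := (volume : Measure (V m)))
  -- first term
  have e1 : OpS m h b (OpL m h a u) x = ∫ z, AA b x z * (((H ^ (m + 1))⁻¹) • ∫ y,
      AA a (x - H • z) (wv H x y - (z.1, 0)) * u y) := by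
    rw [OpS_eq hh b (OpL_int h a u)]
    congr 1; ext z
    rw [OpL_eq hh a hui]
    simp only [← hHdef, wv_shift hH]
  have i1 : Integrable (fun z => AA b x z * (((H ^ (m + 1))⁻¹) • ∫ y,
      AA a (x - H • z) (wv H x y - (z.1, 0)) * u y)) := by
    obtain ⟨C, hC⟩ := OpL_bdd h a u
    have : Integrable (fun z => AA b x z * OpL m h a u (x - H • z)) :=
      (AA_int b x).mul_bdd (c := C) ((OpL_meas h a u).comp_measurable
        (by fun_prop)).aestronglyMeasurable (Filter.Eventually.of_forall fun z => hC _)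
    refine this.congr (Filter.Eventually.of_forall fun z => ?_)
    simp only
    rw [OpL_eq hh a hui]
    simp only [← hHdef, wv_shift hH]
  -- second term
  obtain ⟨CA, hCA⟩ := AA_bdd0 a
  have hInteg : Integrable (fun p : V m × V m =>
      AA a x (wv H x p.2 - (p.1.1, 0)) * (AA b x p.1 * u p.2)) := by
    refine int3 (f := AA b x) (g := u) (AA_int b x) hui
      (F := fun p : V m × V m => AA a x (wv H x p.2 - (p.1.1, 0))) ?_ CA fun p => hCA _ _
    refine (AA_cont a x).comp (Continuous.sub ((wv_cont H x).comp continuous_snd) ?_)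
    fun_prop
  have hsw := integral_integral_swap (μ := (volume : Measure (V m))) (ν := (volume : Measure (V m)))
    (f := fun z y => AA a x (wv H x y - (z.1, 0)) * (AA b x z * u y)) hInteg
  have hz : ∀ z, (∫ y, AA a x (wv H x y - (z.1, 0)) * (AA b x z * u y)) =
      AA b x z * ∫ y, AA a x (wv H x y - (z.1, 0)) * u y := by
    intro z
    rw [← integral_const_mul]
    congr 1; ext y; ring
  have e2 : OpL m h c u x = ∫ z, AA b x z * (((H ^ (m + 1))⁻¹) • ∫ y,
      AA a x (wv H x y - (z.1, 0)) * u y) := by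
    rw [OpL_eq hh c hui, ← hHdef]
    simp only [mul_smul_comm]
    rw [integral_smul]
    congr 1
    simp only [hz] at hsw
    rw [hsw]
    congr 1; ext y
    rw [AA_conv a b c hc, ← integral_mul_const]
    congr 1; ext z; ring
  have i2 : Integrable (fun z => AA b x z * (((H ^ (m + 1))⁻¹) • ∫ y,
      AA a x (wv H x y - (z.1, 0)) * u y)) := by
    have h1 : Integrable (fun z => ∫ y, AA a x (wv H x y - (z.1, 0)) * (AA b x z * u y)) :=
      Integrable.integral_prod_left (μ := (volume : Measure (V m)))
        (ν := (volume : Measure (V m))) hInteg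
    refine (h1.smul ((H ^ (m + 1))⁻¹)).congr (Filter.Eventually.of_forall fun z => ?_)
    simp only [Pi.smul_apply, hz, mul_smul_comm]
  rw [e1, e2, ← integral_sub i1 i2]
  congr 1; ext z
  rw [← mul_sub, ← smul_sub, ← integral_sub (AAu_int a u _ _ (wv_cont H x))
    (AAu_int a u _ _ (wv_cont H x))]
  simp only [sub_mul]

/-- pointwise bound for the difference -/
lemma diff_bound {m : ℕ} (a b c : 𝓢(V m × V m, ℂ))
    (hc : ∀ x ξ : V m, c (x, ξ) = b (x, (ξ.1, (0:ℝ))) * a (x, ξ)) :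
    ∃ C : ℝ, 0 ≤ C ∧ ∀ h : ℝ, 0 < h → h ≤ 1 → ∀ (u : 𝓢(V m, ℂ)) (x : V m),
      ‖OpS m h b (OpL m h a u) x - OpL m h c u x‖ ≤
        C * ((2 * Real.pi * h) * ((2 * Real.pi * h) ^ (m + 1))⁻¹ * (1 + ‖x‖)⁻¹ *
          ∫ y, ((1 + ‖wv (2 * Real.pi * h) x y‖) ^ (m + 2))⁻¹ * ‖u y‖) := by
  obtain ⟨C1, hC1, h1⟩ := AA_diff a (m + 2)
  obtain ⟨C2, hC2, h2⟩ := AA_bdd b ((m + 2) + 2 + (m + 2))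
  refine ⟨7 * C1 * C2 * ∫ z : V m, ((1 + ‖z‖) ^ (m + 2))⁻¹, by positivity,
    fun h hh hh1 u x => ?_⟩
  rw [diff_formula a b c hc hh]
  set H := 2 * Real.pi * h with hHdef
  have hH : 0 < H := by have := Real.pi_pos; positivity
  have hH7 : H ≤ 7 := by nlinarith [Real.pi_pos, Real.pi_lt_d2]
  set J := ∫ y, ((1 + ‖wv H x y‖) ^ (m + 2))⁻¹ * ‖u y‖ with hJ
  have hJ0 : 0 ≤ J := integral_nonneg fun y => by positivity
  have hJi : Integrable (fun y => ((1 + ‖wv H x y‖) ^ (m + 2))⁻¹ * ‖u y‖) := by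
    refine (u.integrable.norm).bdd_mul (c := 1) ?_ (Filter.Eventually.of_forall fun y => ?_)
    · refine Continuous.aestronglyMeasurable (Continuous.inv₀ ?_ fun y => by positivity)
      exact (continuous_const.add (wv_cont H x).norm).pow _
    · rw [Real.norm_of_nonneg (by positivity)]
      refine inv_le_one_of_one_le₀ (one_le_pow₀ ?_)
      linarith [norm_nonneg (wv H x y)]
  have hin : ∀ z : V m, ‖∫ y, (AA a (x - H • z) (wv H x y - (z.1, 0)) -
      AA a x (wv H x y - (z.1, 0))) * u y‖ ≤
        7 * C1 * H * (1 + ‖x‖)⁻¹ * (1 + ‖z‖) ^ (m + 2 + 2) * J := by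
    intro z
    rw [hJ, ← integral_const_mul]
    refine norm_integral_le_of_norm_le (hJi.const_mul _) (Filter.Eventually.of_forall fun y => ?_)
    set s := wv H x y - (z.1, 0) with hs
    have k1 := h1 x (-(H • z)) s
    rw [← sub_eq_add_neg, norm_neg, norm_smul, Real.norm_of_nonneg hH.le] at k1
    have hz : ‖z.1‖ ≤ ‖z‖ := le_max_left _ _
    have k2 : 1 + ‖wv H x y‖ ≤ (1 + ‖s‖) * (1 + ‖z‖) := by
      have e : wv H x y = s + (z.1, 0) := by simp [hs]
      have e2 : ‖((z.1, 0) : V m)‖ ≤ ‖z‖ := by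
        rw [Prod.norm_def]; simp [hz]
      have := norm_add_le s (z.1, 0)
      rw [← e] at this
      nlinarith [norm_nonneg s, norm_nonneg z]
    have k3 : H * ‖z‖ * (1 + H * ‖z‖) ≤ 7 * H * (1 + ‖z‖) ^ 2 := by
      have : 1 + H * ‖z‖ ≤ 7 * (1 + ‖z‖) := by nlinarith [norm_nonneg z]
      have h0 := norm_nonneg z
      calc _ ≤ H * (1 + ‖z‖) * (7 * (1 + ‖z‖)) := by gcongr; linarith
        _ = _ := by ring
    have k4 : ‖AA a (x - H • z) s - AA a x s‖ ≤
        7 * C1 * H * (1 + ‖x‖)⁻¹ * (1 + ‖z‖) ^ (m + 2 + 2) * ((1 + ‖wv H x y‖) ^ (m + 2))⁻¹ := by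
      rw [← div_eq_mul_inv _ ((1 + ‖wv H x y‖) ^ (m + 2)), le_div_iff₀ (by positivity)]
      calc _ ≤ ‖AA a (x - H • z) s - AA a x s‖ * ((1 + ‖s‖) * (1 + ‖z‖)) ^ (m + 2) := by gcongr
        _ = ((1 + ‖s‖) ^ (m + 2) * ‖AA a (x - H • z) s - AA a x s‖) * (1 + ‖z‖) ^ (m + 2) := by
          rw [mul_pow]; ring
        _ ≤ (C1 * (H * ‖z‖ * (1 + H * ‖z‖) / (1 + ‖x‖))) * (1 + ‖z‖) ^ (m + 2) := by gcongr
        _ ≤ (C1 * (7 * H * (1 + ‖z‖) ^ 2 / (1 + ‖x‖))) * (1 + ‖z‖) ^ (m + 2) := by gcongr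
        _ = _ := by rw [pow_add (1 + ‖z‖) (m + 2) 2]; ring
    rw [norm_mul]
    calc _ ≤ _ := mul_le_mul_of_nonneg_right k4 (norm_nonneg _)
      _ = _ := by ring
  have hfin := norm_integral_le_of_norm_le (jbV.const_mul
      (7 * C1 * C2 * (H * (H ^ (m + 1))⁻¹ * (1 + ‖x‖)⁻¹ * J)))
    (f := fun z => AA b x z * ((H ^ (m + 1))⁻¹ • ∫ y, (AA a (x - H • z) (wv H x y - (z.1, 0)) -
      AA a x (wv H x y - (z.1, 0))) * u y)) (Filter.Eventually.of_forall fun z => by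
      have k5 : ‖AA b x z‖ ≤ C2 * ((1 + ‖z‖) ^ (m + 2 + 2))⁻¹ * ((1 + ‖z‖) ^ (m + 2))⁻¹ := by
        rw [mul_assoc, ← mul_inv, ← div_eq_mul_inv, le_div_iff₀ (by positivity), ← pow_add, mul_comm]
        exact h2 x z
      rw [norm_mul, norm_smul, Real.norm_of_nonneg (by positivity)]
      calc _ ≤ (C2 * ((1 + ‖z‖) ^ (m + 2 + 2))⁻¹ * ((1 + ‖z‖) ^ (m + 2))⁻¹) *
            ((H ^ (m + 1))⁻¹ * (7 * C1 * H * (1 + ‖x‖)⁻¹ * (1 + ‖z‖) ^ (m + 2 + 2) * J)) := by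
            gcongr; exact hin z
        _ = _ := by field_simp)
  refine hfin.trans (le_of_eq ?_)
  rw [integral_const_mul]; ring

end S7

namespace S7
open scoped SchwartzMap FourierTransform ENNReal

lemma cs {X : Type*} [MeasurableSpace X] (μ : Measure X) {Q f g : X → ℝ≥0∞} (hQ : Measurable Q)
    (hf : Measurable f) (hg : Measurable g) :
    (∫⁻ y, Q y * (f y * g y) ∂μ) ^ 2 ≤ (∫⁻ y, Q y * f y ^ 2 ∂μ) * ∫⁻ y, Q y * g y ^ 2 ∂μ := by
  have hq : ∀ y, Q y ^ (1/2 : ℝ) * Q y ^ (1/2 : ℝ) = Q y := fun y => by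
    rw [← ENNReal.rpow_add_of_nonneg _ _ (by norm_num) (by norm_num)]; norm_num
  have h1 := ENNReal.lintegral_mul_le_Lp_mul_Lq μ Real.HolderConjugate.two_two
    (f := fun y => Q y ^ (1/2 : ℝ) * f y) (g := fun y => Q y ^ (1/2 : ℝ) * g y)
    (by fun_prop) (by fun_prop)
  have e0 : ∀ y, ((fun y => Q y ^ (1/2 : ℝ) * f y) * (fun y => Q y ^ (1/2 : ℝ) * g y)) y =
      Q y * (f y * g y) := fun y => by
    simp only [Pi.mul_apply]
    rw [mul_mul_mul_comm, hq]
  have e1 : ∀ (f : X → ℝ≥0∞) y, (Q y ^ (1/2 : ℝ) * f y) ^ (2 : ℝ) = Q y * f y ^ 2 := fun f y => by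
    rw [ENNReal.rpow_two, mul_pow, sq (Q y ^ (1/2 : ℝ)), hq]
  simp only [e0, e1] at h1
  calc _ ≤ _ := pow_le_pow_left' h1 2
    _ = _ := by
      rw [mul_pow, ← ENNReal.rpow_two, ← ENNReal.rpow_two, ← ENNReal.rpow_mul, ← ENNReal.rpow_mul]
      norm_num

lemma schur {X : Type*} [NormedAddCommGroup X] [MeasurableSpace X] [BorelSpace X]
    [SecondCountableTopology X] (μ : Measure X) [SFinite μ] [μ.IsAddLeftInvariant]
    [μ.IsNegInvariant]
    {α β : ℝ → ℝ≥0∞} {Q : X → ℝ≥0∞} {v : X × ℝ → ℝ≥0∞} (hα : Measurable α) (hβ : Measurable β)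
    (hQ : Measurable Q) (hv : Measurable v) :
    ∫⁻ x, (α x.2 * ∫⁻ y, Q (x.1 - y.1) * (β y.2 * v y) ∂(μ.prod volume)) ^ 2 ∂(μ.prod volume) ≤
      (∫⁻ t, α t ^ 2) * (∫⁻ s, Q s ∂μ) ^ 2 * (∫⁻ t, β t ^ 2) * ∫⁻ y, v y ^ 2 ∂(μ.prod volume) := by
  set G : X → ℝ≥0∞ := fun x => ∫⁻ y, Q (x - y.1) * v y ^ 2 ∂(μ.prod volume) with hG
  have hGm : Measurable G := by
    refine Measurable.lintegral_prod_right' (f := fun p : X × (X × ℝ) => Q (p.1 - p.2.1) * v p.2 ^ 2) ?_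
    fun_prop
  have hbound : ∀ x : X × ℝ, (α x.2 * ∫⁻ y, Q (x.1 - y.1) * (β y.2 * v y) ∂(μ.prod volume)) ^ 2 ≤
      ((∫⁻ s, Q s ∂μ) * (∫⁻ t, β t ^ 2)) * (G x.1 * α x.2 ^ 2) := by
    intro x
    have h1 := cs (μ.prod volume) (Q := fun y : X × ℝ => Q (x.1 - y.1)) (f := fun y => β y.2)
      (g := v) (by fun_prop) (by fun_prop) hv
    have h2 : ∫⁻ y : X × ℝ, Q (x.1 - y.1) * β y.2 ^ 2 ∂(μ.prod volume) =
        (∫⁻ s, Q s ∂μ) * (∫⁻ t, β t ^ 2) := by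
      rw [lintegral_prod_mul (f := fun s => Q (x.1 - s)) (g := fun t => β t ^ 2)
        (by fun_prop) (by fun_prop), lintegral_sub_left_eq_self]
    rw [h2] at h1
    rw [mul_pow]
    calc _ ≤ _ := mul_le_mul_right h1 (α x.2 ^ 2)
      _ = _ := by simp only [hG]; ring
  refine (lintegral_mono hbound).trans (le_of_eq ?_)
  rw [lintegral_const_mul _ (by fun_prop), lintegral_prod_mul (f := G) (g := fun t => α t ^ 2)
    (by fun_prop) (by fun_prop)]
  have h3 : ∫⁻ x, G x ∂μ = (∫⁻ s, Q s ∂μ) * ∫⁻ y, v y ^ 2 ∂(μ.prod volume) := by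
    simp only [hG]
    rw [lintegral_lintegral_swap (by fun_prop)]
    rw [← lintegral_const_mul _ (by fun_prop)]
    congr 1; ext y
    rw [lintegral_mul_const _ (by fun_prop), lintegral_sub_right_eq_self Q]
  rw [h3]; ring

lemma lint_scale {X : Type*} [NormedAddCommGroup X] [NormedSpace ℝ X] [FiniteDimensional ℝ X]
    [MeasurableSpace X] [BorelSpace X] (μ : Measure X) [μ.IsAddHaarMeasure] (k : ℕ)
    (hk : Module.finrank ℝ X < k) {H : ℝ} (hH : 0 < H) :
    ∫⁻ s, ENNReal.ofReal ((1 + H⁻¹ * ‖s‖) ^ k)⁻¹ ∂μ =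
      ENNReal.ofReal (H ^ (Module.finrank ℝ X) * ∫ s, ((1 + ‖s‖) ^ k)⁻¹ ∂μ) := by
  have e : ∀ s : X, ((1 + H⁻¹ * ‖s‖) ^ k)⁻¹ = (fun s : X => ((1 + ‖s‖) ^ k)⁻¹) (H⁻¹ • s) := fun s => by
    simp [norm_smul, abs_of_pos hH]
  have h1 := Measure.integral_comp_smul μ (fun s : X => ((1 + ‖s‖) ^ k)⁻¹) H⁻¹
  have h2 := (jb_int μ k hk).comp_smul (R := H⁻¹) (by positivity)
  rw [inv_pow, inv_inv, abs_of_pos (by positivity), smul_eq_mul] at h1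
  rw [← h1]
  simp only [e]
  rw [ofReal_integral_eq_lintegral_ofReal h2 (Filter.Eventually.of_forall fun s => by positivity)]

end S7

namespace S7
open scoped SchwartzMap FourierTransform ENNReal

lemma wv_split {m : ℕ} {H : ℝ} (hH : 0 < H) (x y : V m) :
    ((1 + ‖wv H x y‖) ^ (m + 2))⁻¹ ≤
      ((1 + H⁻¹ * ‖x.1 - y.1‖) ^ (m + 1))⁻¹ * (1 + H⁻¹ * ‖y.2‖)⁻¹ := by
  have h1 : H⁻¹ * ‖x.1 - y.1‖ ≤ ‖wv H x y‖ := by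
    have : ‖(wv H x y).1‖ ≤ ‖wv H x y‖ := le_max_left _ _
    rwa [wv, norm_smul, norm_inv, Real.norm_of_nonneg hH.le] at this
  have h2 : H⁻¹ * ‖y.2‖ ≤ ‖wv H x y‖ := by
    have : ‖(wv H x y).2‖ ≤ ‖wv H x y‖ := le_max_right _ _
    rwa [wv, norm_neg, norm_mul, norm_inv, Real.norm_of_nonneg hH.le] at this
  rw [← mul_inv, pow_succ]
  gcongr

lemma final {m : ℕ} (f : V m → ℂ) (u : 𝓢(V m, ℂ)) {C H : ℝ} (hC : 0 ≤ C) (hH : 0 < H)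
    (hf : ∀ x, ‖f x‖ ≤ C * (H * (H ^ (m + 1))⁻¹ * (1 + ‖x‖)⁻¹ *
      ∫ y, ((1 + ‖wv H x y‖) ^ (m + 2))⁻¹ * ‖u y‖)) :
    eLpNorm f 2 volume ≤ ENNReal.ofReal (C *
      (∫ s : EuclideanSpace ℝ (Fin m), ((1 + ‖s‖) ^ (m + 1))⁻¹) *
      (∫ t : ℝ, ((1 + ‖t‖) ^ 2)⁻¹) * H ^ ((1:ℝ)/2)) * eLpNorm u 2 volume := by
  set q := ∫ s : EuclideanSpace ℝ (Fin m), ((1 + ‖s‖) ^ (m + 1))⁻¹ with hq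
  set r := ∫ t : ℝ, ((1 + ‖t‖) ^ 2)⁻¹ with hr
  have hq0 : 0 ≤ q := integral_nonneg fun _ => by positivity
  have hr0 : 0 ≤ r := integral_nonneg fun _ => by positivity
  set α : ℝ → ℝ≥0∞ := fun t => ENNReal.ofReal (1 + ‖t‖)⁻¹ with hα
  set β : ℝ → ℝ≥0∞ := fun t => ENNReal.ofReal (1 + H⁻¹ * ‖t‖)⁻¹ with hβ
  set Q : EuclideanSpace ℝ (Fin m) → ℝ≥0∞ :=
    fun s => ENNReal.ofReal ((1 + H⁻¹ * ‖s‖) ^ (m + 1))⁻¹ with hQ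
  set v : V m → ℝ≥0∞ := fun y => ‖u y‖ₑ with hv
  have hαm : Measurable α := by fun_prop
  have hβm : Measurable β := by fun_prop
  have hQm : Measurable Q := by fun_prop
  have hvm : Measurable v := u.continuous.enorm.measurable
  have iQ : ∫⁻ s, Q s = ENNReal.ofReal (H ^ m * q) := by
    have := lint_scale (volume : Measure (EuclideanSpace ℝ (Fin m))) (m + 1) (by simp) hH
    simpa using this
  have iβ : ∫⁻ t, β t ^ 2 = ENNReal.ofReal (H * r) := by
    have := lint_scale (volume : Measure ℝ) 2 (by simp) hH
    rw [Module.finrank_self, pow_one] at this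
    rw [← this]
    congr 1; ext t
    rw [hβ, ← ENNReal.ofReal_pow (by positivity), inv_pow]
  have iα : ∫⁻ t, α t ^ 2 = ENNReal.ofReal r := by
    have := lint_scale (volume : Measure ℝ) 2 (by simp) (one_pos)
    rw [Module.finrank_self, pow_one, one_mul] at this
    rw [← this]
    congr 1; ext t
    rw [hα, ← ENNReal.ofReal_pow (by positivity), inv_pow, inv_one, one_mul]
  have hpt : ∀ x, ‖f x‖ₑ ≤ ENNReal.ofReal (C * (H * (H ^ (m + 1))⁻¹)) *
      (α x.2 * ∫⁻ y, Q (x.1 - y.1) * (β y.2 * v y)) := by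
    intro x
    have h1 : (1 + ‖x‖)⁻¹ ≤ (1 + ‖x.2‖)⁻¹ := by
      have : ‖x.2‖ ≤ ‖x‖ := le_max_right _ _
      gcongr
    have h2 : ENNReal.ofReal (∫ y, ((1 + ‖wv H x y‖) ^ (m + 2))⁻¹ * ‖u y‖) ≤
        ∫⁻ y, Q (x.1 - y.1) * (β y.2 * v y) := by
      have h3 : ‖∫ y, ((1 + ‖wv H x y‖) ^ (m + 2))⁻¹ * ‖u y‖‖ₑ ≤ _ :=
        enorm_integral_le_lintegral_enorm _
      rw [Real.enorm_of_nonneg (integral_nonneg fun y => by positivity)] at h3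
      refine h3.trans (lintegral_mono fun y => ?_)
      rw [Real.enorm_of_nonneg (by positivity), ENNReal.ofReal_mul (by positivity),
        ofReal_norm, ← mul_assoc]
      simp only [hQ, hβ, hv]
      gcongr
      rw [← ENNReal.ofReal_mul (by positivity)]
      exact ENNReal.ofReal_le_ofReal (wv_split hH x y)
    rw [← ofReal_norm]
    calc _ ≤ _ := ENNReal.ofReal_le_ofReal (hf x)
      _ = ENNReal.ofReal (C * (H * (H ^ (m + 1))⁻¹)) * (ENNReal.ofReal (1 + ‖x‖)⁻¹ *
          ENNReal.ofReal (∫ y, ((1 + ‖wv H x y‖) ^ (m + 2))⁻¹ * ‖u y‖)) := by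
          rw [← ENNReal.ofReal_mul (by positivity), ← ENNReal.ofReal_mul (by positivity)]
          congr 1; ring
      _ ≤ _ := by gcongr; exact ENNReal.ofReal_le_ofReal h1
  have hS := schur (volume : Measure (EuclideanSpace ℝ (Fin m))) hαm hβm hQm hvm
  rw [← Measure.volume_eq_prod, iα, iβ, iQ] at hS
  have hmain : ∫⁻ x, ‖f x‖ₑ ^ 2 ≤ ENNReal.ofReal (C * q * r * H ^ ((1:ℝ)/2)) ^ 2 *
      ∫⁻ y, ‖u y‖ₑ ^ 2 := by
    calc _ ≤ ∫⁻ x : V m, ENNReal.ofReal (C * (H * (H ^ (m + 1))⁻¹)) ^ 2 *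
          (α x.2 * ∫⁻ y, Q (x.1 - y.1) * (β y.2 * v y)) ^ 2 := by
          refine lintegral_mono fun x => ?_
          rw [← mul_pow]
          exact pow_le_pow_left' (hpt x) 2
      _ = ENNReal.ofReal (C * (H * (H ^ (m + 1))⁻¹)) ^ 2 * ∫⁻ x : V m,
          (α x.2 * ∫⁻ y, Q (x.1 - y.1) * (β y.2 * v y)) ^ 2 := by
          rw [lintegral_const_mul' _ _ (by finiteness)]
      _ ≤ ENNReal.ofReal (C * (H * (H ^ (m + 1))⁻¹)) ^ 2 * (ENNReal.ofReal r *
          ENNReal.ofReal (H ^ m * q) ^ 2 * ENNReal.ofReal (H * r) * ∫⁻ y, v y ^ 2) := by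
          gcongr
      _ = _ := by
          rw [← mul_assoc]
          congr 1
          have hHr : (H ^ ((1:ℝ)/2)) ^ 2 = H := by
            rw [← Real.rpow_natCast, ← Real.rpow_mul hH.le]; norm_num
          rw [← ENNReal.ofReal_pow (by positivity), ← ENNReal.ofReal_pow (by positivity),
            ← ENNReal.ofReal_pow (by positivity), ← ENNReal.ofReal_mul (by positivity),
            ← ENNReal.ofReal_mul (by positivity), ← ENNReal.ofReal_mul (by positivity)]
          congr 1
          rw [mul_pow (C * q * r), hHr]
          field_simp
          ring
  rw [eLpNorm_eq_lintegral_rpow_enorm_toReal (by norm_num) (by norm_num),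
    eLpNorm_eq_lintegral_rpow_enorm_toReal (by norm_num) (by norm_num)]
  simp only [ENNReal.toReal_ofNat, ENNReal.rpow_two]
  calc _ ≤ _ := ENNReal.rpow_le_rpow hmain (by norm_num)
    _ = _ := by
      rw [ENNReal.mul_rpow_of_nonneg _ _ (by norm_num), ← ENNReal.rpow_two, ← ENNReal.rpow_mul]
      norm_num

end S7

/-- if `c(x,ξ) = b(x,ξ',0) a(x,ξ)` then
`‖(Op_h(b) ∘ Op_h^Λ(a))u − Op_h^Λ(c)u‖_{L²} ≤ C h^{1/2} ‖u‖_{L²}` for all `h ∈ (0,1]`. -/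
theorem stmt_7 (m : ℕ) (a b c : SchwartzMap (V m × V m) ℂ)
    (hc : ∀ x ξ : V m, c (x, ξ) = b (x, (ξ.1, (0:ℝ))) * a (x, ξ)) :
    ∃ C > 0, ∀ h : ℝ, 0 < h → h ≤ 1 → ∀ u : SchwartzMap (V m) ℂ,
      eLpNorm (fun x : V m => OpS m h ⇑b (OpL m h ⇑a ⇑u) x - OpL m h ⇑c ⇑u x) 2 volume ≤
        ENNReal.ofReal (C * h ^ ((1:ℝ)/2)) * eLpNorm (⇑u) 2 volume := by
  obtain ⟨C, hC, h⟩ := S7.diff_bound a b c hc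
  set q := ∫ s : EuclideanSpace ℝ (Fin m), ((1 + ‖s‖) ^ (m + 1))⁻¹ with hq
  set r := ∫ t : ℝ, ((1 + ‖t‖) ^ 2)⁻¹ with hr
  have hq0 : 0 ≤ q := integral_nonneg fun _ => by positivity
  have hr0 : 0 ≤ r := integral_nonneg fun _ => by positivity
  refine ⟨C * q * r * (2 * Real.pi) ^ ((1:ℝ)/2) + 1, by positivity, fun t ht ht1 u => ?_⟩
  have hH : 0 < 2 * Real.pi * t := by have := Real.pi_pos; positivity
  refine (S7.final _ u hC hH (h t ht ht1 u)).trans ?_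
  refine mul_le_mul' (ENNReal.ofReal_le_ofReal ?_) le_rfl
  rw [Real.mul_rpow (by positivity) ht.le, ← mul_assoc]
  exact mul_le_mul_of_nonneg_right (by linarith) (by positivity)
end
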